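/- Let R be an integral domain that is a finitely generated ℂ-algebra, equipped with ℂ-linear derivations δ₁, …, δ_m : R → R (not assumed to commute). Suppose there are infinitely many prime ideals P of R of height one such that δᵢ(x) ∈ P for every x ∈ P and every i = 1, …, m (i.e., infinitely many height one prime differential ideals). Then there exist a, b ∈ R with b ≠ 0 such that δᵢ(a)·b = a·δᵢ(b) for every i = 1, …, m, and there is no c ∈ ℂ with a = c·b. (Equivalently: the element f = a/b of the fraction field Frac(R) lies outside ℂ and satisfies δᵢ(f) = 0 for all i, where δᵢ denotes the unique extension of δᵢ to Frac(R).) -/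

import Mathlib

namespace DHO

open scoped TensorProduct

theorem deriv_extend {k S T : Type*} [CommRing k] [CommRing S] [CommRing T] [Algebra k S] [Algebra k T]
    [Algebra S T] [IsScalarTower k S T] [Algebra.FormallyEtale S T] (d : Derivation k S T) :
    ∃ D : Derivation k T T, ∀ s, D (algebraMap S T s) = d s := by
  let e := KaehlerDifferential.tensorKaehlerEquivOfFormallyEtale k S T
  let φ : T ⊗[S] Ω[S⁄k] →ₗ[T] T := d.liftKaehlerDifferential.liftBaseChange T
  refine ⟨(φ ∘ₗ e.symm.toLinearMap).compDer (KaehlerDifferential.D k T), fun s => ?_⟩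
  have := KaehlerDifferential.tensorKaehlerEquivOfFormallyEtale_symm_D_algebraMap k S T s
  simp [φ, e, this]

/-- extension of a derivation of a domain to the fraction field -/
theorem deriv_frac {k R K : Type*} [Field k] [CommRing R] [IsDomain R] [Field K] [Algebra k R]
    [Algebra k K] [Algebra R K] [IsScalarTower k R K] [IsFractionRing R K] (d : Derivation k R R) :
    ∃ D : Derivation k K K, ∀ s, D (algebraMap R K s) = algebraMap R K (d s) := by
  have : Algebra.FormallyEtale R K := Algebra.FormallyEtale.of_isLocalization (nonZeroDivisors R)
  obtain ⟨D, hD⟩ := deriv_extend (k := k) (S := R) (T := K) ((Algebra.linearMap R K).compDer d)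
  exact ⟨D, fun s => by simp [hD]⟩

/-- Horizontal vectors: independence over constants implies independence over the field. -/
theorem horiz_indep {k K V ι J : Type*} [Field k] [Field K] [Algebra k K] [AddCommGroup V] [Module K V]
    [Module k V] [IsScalarTower k K V]
    (δ : J → Derivation k K K) (hc : ∀ x : K, (∀ j, δ j x = 0) → ∃ c : k, x = algebraMap k K c)
    (E : J → V →+ V) (hE : ∀ j (c : K) v, E j (c • v) = δ j c • v + c • E j v)
    (X : ι → V) (hX : ∀ j i, E j (X i) = 0) (hind : LinearIndependent k X) :
    LinearIndependent K X := by
  classical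
  rw [linearIndependent_iff']
  intro s
  induction s using Finset.induction_on with
  | empty => intro g _ i hi; simp at hi
  | insert a s ha ih =>
    intro g hg
    have key : g a = 0 := by
      by_contra hne
      let c : ι → K := fun i => (g a)⁻¹ * g i
      have hca : c a = 1 := by simp [c, hne]
      have hsum : ∑ i ∈ insert a s, c i • X i = 0 := by
        have : ∑ i ∈ insert a s, c i • X i = (g a)⁻¹ • ∑ i ∈ insert a s, g i • X i := by
          rw [Finset.smul_sum]; simp [c, mul_smul]
        rw [this, hg, smul_zero]
      have hd : ∀ j, ∀ i ∈ s, δ j (c i) = 0 := by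
        intro j
        apply ih (fun i => δ j (c i))
        have h1 := congrArg (E j) hsum
        rw [map_sum, map_zero, Finset.sum_insert ha] at h1
        simp only [hE, hX, smul_zero, add_zero, hca, Derivation.map_one_eq_zero, zero_smul, zero_add] at h1
        exact h1
      have hd' : ∀ i ∈ insert a s, ∃ d : k, c i = algebraMap k K d := by
        intro i hi
        rcases Finset.mem_insert.1 hi with rfl | hi
        · exact ⟨1, by simp [hca]⟩
        · exact hc _ fun j => hd j i hi
      choose! d hd' using hd'
      rw [linearIndependent_iff'] at hind
      have h2 := hind (insert a s) d (by
        rw [← hsum]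
        refine Finset.sum_congr rfl fun i hi => ?_
        rw [hd' i hi, algebraMap_smul]) a (Finset.mem_insert_self _ _)
      have h3 := hd' a (Finset.mem_insert_self _ _)
      rw [h2, hca] at h3
      simp at h3
    rw [Finset.sum_insert ha, key, zero_smul, zero_add] at hg
    intro i hi
    rcases Finset.mem_insert.1 hi with rfl | hi
    · exact key
    · exact ih g hg i hi

/-- The abstract finiteness principle. -/
theorem finiteness_principle {k K ι : Type*} [Field k] [Field K] [Algebra k K] [Infinite ι] {m n : ℕ}
    (δ : Fin m → Derivation k K K)
    (hc : ∀ x : K, (∀ j, δ j x = 0) → ∃ c : k, x = algebraMap k K c)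
    (L : Fin m → (Fin n → K) →+ (Fin n → K))
    (hL : ∀ j (c : K) v, L j (c • v) = δ j c • v + c • L j v)
    (G : Submodule k (Fin n → K)) [FiniteDimensional k G]
    (x : ι → Fin n → K) (hx : ∀ j i, L j (x i) ∈ G) (hind : LinearIndependent k x) : False := by
  classical
  let b := Module.finBasis k G
  let g := Module.finrank k G
  let S : Fin m → ((Fin n → K) × (Fin m → Fin g → K)) →+ (Fin n → K) := fun j =>
    { toFun := fun v => ∑ l, v.2 j l • (b l : Fin n → K)
      map_zero' := by simp
      map_add' := by intro v w; simp [add_smul, Finset.sum_add_distrib] }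
  let D : Fin m → ((Fin n → K) × (Fin m → Fin g → K)) →+ (Fin m → Fin g → K) := fun j =>
    { toFun := fun v => fun j' l => δ j (v.2 j' l)
      map_zero' := by ext; simp
      map_add' := by intro v w; ext; simp }
  let E : Fin m → ((Fin n → K) × (Fin m → Fin g → K)) →+ ((Fin n → K) × (Fin m → Fin g → K)) := fun j => AddMonoidHom.prod ((L j).comp (AddMonoidHom.fst _ _) - S j) (D j)
  have hE : ∀ j (c : K) v, E j (c • v) = δ j c • v + c • E j v := by
    intro j c v
    apply Prod.ext
    · simp only [E, S, AddMonoidHom.prod_apply, AddMonoidHom.sub_apply, AddMonoidHom.comp_apply,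
        AddMonoidHom.coe_fst, Prod.smul_fst, hL, AddMonoidHom.coe_mk, ZeroHom.coe_mk, Prod.smul_snd,
        Pi.smul_apply, smul_assoc, ← Finset.smul_sum, Prod.fst_add, smul_sub]
      abel
    · ext j' l
      simp [E, D]
      ring
  let X : ι → ((Fin n → K) × (Fin m → Fin g → K)) := fun i => (x i, fun j l => algebraMap k K (b.repr ⟨L j (x i), hx j i⟩ l))
  have hX : ∀ j i, E j (X i) = 0 := by
    intro j i
    apply Prod.ext
    · simp only [E, S, X, AddMonoidHom.prod_apply, AddMonoidHom.sub_apply, AddMonoidHom.comp_apply,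
        AddMonoidHom.coe_fst, AddMonoidHom.coe_mk, ZeroHom.coe_mk, algebraMap_smul, Prod.fst_zero]
      have := congrArg (Subtype.val) (b.sum_repr ⟨L j (x i), hx j i⟩)
      rw [sub_eq_zero]
      simp only [Submodule.coe_sum, Submodule.coe_smul] at this
      exact this.symm
    · ext j' l
      simp [E, D, X]
  have hXi : LinearIndependent k X :=
    LinearIndependent.of_comp (LinearMap.fst k (Fin n → K) (Fin m → Fin g → K)) hind
  have := horiz_indep δ hc E hE X hX hXi
  have hfin := this.finite
  exact not_finite ι

end DHO

namespace DHO
open Polynomial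

theorem integral_of_rel {O E : Type*} [CommRing O] [Field E] [Algebra O E] (u : E) (r : ℕ) (a : ℕ → E)
    (ha : ∀ i < r, IsIntegral O (a i)) (h : u ^ r + ∑ i ∈ Finset.range r, a i * u ^ i = 0) :
    IsIntegral O u := by
  classical
  let I := integralClosure O E
  let a' : ℕ → I := fun i => if hi : i < r then ⟨a i, ha i hi⟩ else 0
  have : IsIntegral I u := by
    refine ⟨X ^ r + ∑ i ∈ Finset.range r, C (a' i) * X ^ i, ?_, ?_⟩
    · apply monic_X_pow_add
      refine lt_of_le_of_lt (degree_sum_le _ _) ?_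
      refine (Finset.sup_lt_iff (WithBot.bot_lt_coe r)).2 ?_
      intro i hi
      exact lt_of_le_of_lt (degree_C_mul_X_pow_le _ _) (Nat.cast_lt.2 (Finset.mem_range.1 hi))
    · rw [eval₂_add, eval₂_X_pow, eval₂_finsetSum, ← h]
      congr 1
      refine Finset.sum_congr rfl fun i hi => ?_
      have hi' := Finset.mem_range.1 hi
      simp [a', hi']
  exact isIntegral_trans (R := O) (A := I) u this

variable {k σ : Type*} [Field k]

/-- The valuation ring at infinity of a rational function field. -/
def Oinf (k σ L : Type*) [Field k] [Field L] [Algebra (MvPolynomial σ k) L]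
    [IsFractionRing (MvPolynomial σ k) L] : ValuationSubring L where
  carrier := {x | ∃ a b : MvPolynomial σ k, b ≠ 0 ∧ x * algebraMap _ L b = algebraMap _ L a ∧
    a.totalDegree ≤ b.totalDegree}
  zero_mem' := ⟨0, 1, one_ne_zero, by simp, by simp⟩
  one_mem' := ⟨1, 1, one_ne_zero, by simp, le_rfl⟩
  mul_mem' := by
    rintro x y ⟨a, b, hb, h, hd⟩ ⟨a', b', hb', h', hd'⟩
    refine ⟨a * a', b * b', mul_ne_zero hb hb', ?_, ?_⟩
    · rw [map_mul, map_mul, ← h, ← h']; ring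
    · rw [MvPolynomial.totalDegree_mul_of_isDomain hb hb']
      exact (MvPolynomial.totalDegree_mul _ _).trans (add_le_add hd hd')
  add_mem' := by
    rintro x y ⟨a, b, hb, h, hd⟩ ⟨a', b', hb', h', hd'⟩
    refine ⟨a * b' + a' * b, b * b', mul_ne_zero hb hb', ?_, ?_⟩
    · rw [map_mul, map_add, map_mul, map_mul, ← h, ← h']; ring
    · rw [MvPolynomial.totalDegree_mul_of_isDomain hb hb']
      refine (MvPolynomial.totalDegree_add _ _).trans (max_le ?_ ?_)
      · exact (MvPolynomial.totalDegree_mul _ _).trans (by omega)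
      · exact (MvPolynomial.totalDegree_mul _ _).trans (by omega)
  neg_mem' := by
    rintro x ⟨a, b, hb, h, hd⟩
    exact ⟨-a, b, hb, by rw [map_neg, ← h]; ring, by simpa using hd⟩
  mem_or_inv_mem' := by
    intro x
    obtain ⟨a, b, hb, rfl⟩ := IsFractionRing.div_surjective (A := MvPolynomial σ k) x
    have hb0 : b ≠ 0 := nonZeroDivisors.ne_zero hb
    have hb' : algebraMap _ L b ≠ 0 := by simpa using hb0
    by_cases ha : a = 0
    · left; subst ha; exact ⟨0, 1, one_ne_zero, by simp, by simp⟩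
    have ha' : algebraMap _ L a ≠ 0 := by simpa using ha
    rcases le_total a.totalDegree b.totalDegree with h | h
    · left; exact ⟨a, b, hb0, by field_simp, h⟩
    · right; exact ⟨b, a, ha, by field_simp, h⟩

variable {L : Type*} [Field L] [Algebra (MvPolynomial σ k) L]
    [IsFractionRing (MvPolynomial σ k) L]

theorem mem_Oinf_iff (q s : MvPolynomial σ k) (hs : s ≠ 0) :
    algebraMap _ L q / algebraMap _ L s ∈ Oinf k σ L ↔ q.totalDegree ≤ s.totalDegree := by
  have hs' : algebraMap _ L s ≠ 0 := by simpa using hs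
  constructor
  · rintro ⟨a, b, hb, h, hd⟩
    have h1 : q * b = a * s := by
      apply IsFractionRing.injective (MvPolynomial σ k) L
      rw [map_mul, map_mul, ← h]; field_simp
    by_cases hq : q = 0
    · simp [hq]
    have ha : a ≠ 0 := by
      rintro rfl
      simp [hq, hb] at h1
    have := congrArg MvPolynomial.totalDegree h1
    rw [MvPolynomial.totalDegree_mul_of_isDomain hq hb, MvPolynomial.totalDegree_mul_of_isDomain ha hs] at this
    omega
  · intro h
    exact ⟨q, s, hs, by field_simp, h⟩

variable {E : Type*} [Field E] [Algebra L E] [Algebra (MvPolynomial σ k) E]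
  [IsScalarTower (MvPolynomial σ k) L E]

/-- `u` is integral over the polynomial ring and has a pole of order at most `e` at infinity. -/
def IsDeg (L : Type*) [Field L] [Algebra (MvPolynomial σ k) L]
    [IsFractionRing (MvPolynomial σ k) L] {E : Type*} [Field E] [Algebra L E] [Algebra (MvPolynomial σ k) E]
  [IsScalarTower (MvPolynomial σ k) L E] (t : MvPolynomial σ k) (e : ℕ) (u : E) : Prop :=
  IsIntegral (MvPolynomial σ k) u ∧ IsIntegral (Oinf k σ L) (u / algebraMap _ E t ^ e)


theorem t_ne {t : MvPolynomial σ k} (ht : t.totalDegree = 1) : t ≠ 0 := by rintro rfl; simp at ht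

theorem tdeg_pow {t : MvPolynomial σ k} (ht : t.totalDegree = 1) (e : ℕ) :
    (t ^ e).totalDegree = e := by
  induction e with
  | zero => simp
  | succ e ih =>
    rw [pow_succ, MvPolynomial.totalDegree_mul_of_isDomain (pow_ne_zero _ (t_ne ht)) (t_ne ht), ih, ht]

theorem IsDeg.mul {t : MvPolynomial σ k} (ht : t.totalDegree = 1) {e e' : ℕ} {u v : E} (hu : IsDeg L t e u) (hv : IsDeg L t e' v) :
    IsDeg L t (e + e') (u * v) := by
  refine ⟨hu.1.mul hv.1, ?_⟩
  have := hu.2.mul hv.2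
  rwa [div_mul_div_comm, ← pow_add] at this

theorem isDeg_algebraMap {t : MvPolynomial σ k} (ht : t.totalDegree = 1) {e : ℕ} (q : MvPolynomial σ k) (h : q.totalDegree ≤ e) :
    IsDeg L t e (algebraMap _ E q) := by
  refine ⟨isIntegral_algebraMap, ?_⟩
  have h1 : (algebraMap _ L q / algebraMap _ L (t ^ e)) ∈ Oinf k σ L := by
    rw [mem_Oinf_iff _ _ (pow_ne_zero _ (t_ne ht)), tdeg_pow ht]
    exact h
  have := isIntegral_algebraMap (R := Oinf k σ L) (A := E) (x := ⟨_, h1⟩)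
  convert this
  rw [IsScalarTower.algebraMap_apply (MvPolynomial σ k) L E, IsScalarTower.algebraMap_apply (MvPolynomial σ k) L E,
    ← map_pow, ← map_pow, ← map_div₀]
  rfl

theorem IsDeg.add {t : MvPolynomial σ k} (ht : t.totalDegree = 1) {e : ℕ} {u v : E} (hu : IsDeg L t e u) (hv : IsDeg L t e v) :
    IsDeg L t e (u + v) := by
  refine ⟨hu.1.add hv.1, ?_⟩
  have := hu.2.add hv.2
  rwa [← add_div] at this

theorem IsDeg.pow {t : MvPolynomial σ k} (ht : t.totalDegree = 1) {e : ℕ} {u : E} (hu : IsDeg L t e u) (r : ℕ) :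
    IsDeg L t (e * r) (u ^ r) := by
  refine ⟨hu.1.pow r, ?_⟩
  have := hu.2.pow r
  rwa [div_pow, ← pow_mul] at this

theorem IsDeg.mono {t : MvPolynomial σ k} (ht : t.totalDegree = 1) {e e' : ℕ} {u : E} (hu : IsDeg L t e u) (h : e ≤ e') :
    IsDeg L t e' u := by
  obtain ⟨c, rfl⟩ := Nat.exists_eq_add_of_le h
  have := IsDeg.mul ht hu (isDeg_algebraMap (L := L) (E := E) ht (e := c) 1 (by simp))
  simpa using this

theorem IsDeg.sum {t : MvPolynomial σ k} (ht : t.totalDegree = 1) {ι : Type*} (s : Finset ι) {e : ℕ} {u : ι → E} (hu : ∀ i ∈ s, IsDeg L t e (u i)) :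
    IsDeg L t e (∑ i ∈ s, u i) := by
  classical
  induction s using Finset.induction_on with
  | empty => simpa using isDeg_algebraMap (L := L) (E := E) ht (e := e) 0 (by simp)
  | insert a s ha ih =>
    rw [Finset.sum_insert ha]
    exact IsDeg.add ht (hu a (by simp)) (ih fun i hi => hu i (by simp [hi]))

theorem IsDeg.of_rel {t : MvPolynomial σ k} (ht : t.totalDegree = 1) {e : ℕ} (u : E) (r : ℕ) (a : ℕ → E)
    (ha : ∀ i < r, IsDeg L t (e * (r - i)) (a i)) (h : u ^ r + ∑ i ∈ Finset.range r, a i * u ^ i = 0) :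
    IsDeg L t e u := by
  refine ⟨integral_of_rel u r a (fun i hi => (ha i hi).1) h, ?_⟩
  refine integral_of_rel _ r (fun i => a i / algebraMap _ E t ^ (e * (r - i))) (fun i hi => (ha i hi).2) ?_
  have : ∀ i ∈ Finset.range r, a i / algebraMap _ E t ^ (e * (r - i)) * (u / algebraMap _ E t ^ e) ^ i =
      a i * u ^ i / algebraMap _ E t ^ (e * r) := by
    intro i hi
    have hi' := Finset.mem_range.1 hi
    rw [div_pow, div_mul_div_comm, ← pow_mul, ← pow_add, ← mul_add]
    congr 3
    omega
  rw [Finset.sum_congr rfl this, ← Finset.sum_div, div_pow, ← pow_mul, ← add_div, h, zero_div]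

theorem IsDeg.trace {t : MvPolynomial σ k} (ht : t.totalDegree = 1) [FiniteDimensional L E] [CharZero k] {e : ℕ} {u : E} (hu : IsDeg L t e u) :
    ∃ q : MvPolynomial σ k, algebraMap _ L q = Algebra.trace L E u ∧ q.totalDegree ≤ e := by
  have h1 : IsIntegral (MvPolynomial σ k) (Algebra.trace L E u) := Algebra.isIntegral_trace hu.1
  obtain ⟨q, hq⟩ := IsIntegrallyClosed.isIntegral_iff.1 h1
  refine ⟨q, hq, ?_⟩
  have h2 : IsIntegral (Oinf k σ L) (Algebra.trace L E (u / algebraMap _ E t ^ e)) :=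
    Algebra.isIntegral_trace hu.2
  have h3 : Algebra.trace L E (u / algebraMap _ E t ^ e) = algebraMap _ L q / algebraMap _ L (t ^ e) := by
    rw [hq, div_eq_inv_mul, div_eq_inv_mul, IsScalarTower.algebraMap_apply (MvPolynomial σ k) L E,
      ← map_pow, ← map_inv₀, ← Algebra.smul_def, map_smul, smul_eq_mul, map_pow]
  rw [h3] at h2
  obtain ⟨w, hw⟩ := IsIntegrallyClosed.isIntegral_iff.1 h2
  have h4 : algebraMap _ L q / algebraMap _ L (t ^ e) ∈ Oinf k σ L := by
    rw [← hw]; exact w.2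
  rw [mem_Oinf_iff _ _ (pow_ne_zero _ (t_ne ht)), tdeg_pow ht] at h4
  exact h4

end DHO

namespace DHO
open Polynomial

/-- Euler's formula: the coefficients of `minpolyDiv` are dual to powers up to the different. -/
theorem trace_mul_coeff_minpolyDiv {K L : Type*} [Field K] [Field L] [Algebra K L]
    [FiniteDimensional K L] [Algebra.IsSeparable K L] {y : L} (hy : Algebra.adjoin K {y} = ⊤)
    (u : L) (p : K[X]) (hp : p.degree < (minpoly K y).degree)
    (h : aeval y p = u * aeval y (derivative (minpoly K y))) (j : ℕ) :
    Algebra.trace K L (u * (minpolyDiv K y).coeff j) = p.coeff j := by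
  classical
  have hyi : IsIntegral K y := Algebra.IsIntegral.isIntegral y
  have hne : aeval y (derivative (minpoly K y)) ≠ 0 :=
    (Algebra.IsSeparable.isSeparable K y).aeval_derivative_ne_zero (minpoly.aeval _ _)
  have hfin : (minpoly K y).natDegree ≤ Module.finrank K L := minpoly.natDegree_le _
  have hu : u = ∑ r ∈ Finset.range (minpoly K y).natDegree,
      p.coeff r • (y ^ r / aeval y (derivative (minpoly K y))) := by
    have h1 : u = aeval y p / aeval y (derivative (minpoly K y)) := by
      rw [h]; field_simp
    have h2 : aeval y p = ∑ r ∈ Finset.range (minpoly K y).natDegree, p.coeff r • y ^ r := by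
      apply aeval_eq_sum_range'
      by_cases hp0 : p = 0
      · subst hp0
        simpa using minpoly.natDegree_pos hyi
      exact natDegree_lt_natDegree hp0 hp
    rw [h1, h2, Finset.sum_div]
    refine Finset.sum_congr rfl fun r _ => ?_
    rw [smul_div_assoc]
  have key : ∀ r < (minpoly K y).natDegree,
      Algebra.trace K L (y ^ r / aeval y (derivative (minpoly K y)) * (minpolyDiv K y).coeff j)
        = if j = r then 1 else 0 := by
    intro r hr
    have := sum_smul_minpolyDiv_eq_X_pow (AlgebraicClosure L) hy (lt_of_lt_of_le hr hfin)
    have := congrArg (fun q => q.coeff j) this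
    simp only [finsetSum_coeff, coeff_map, coeff_smul, coeff_X_pow, smul_eq_mul] at this
    apply (algebraMap K (AlgebraicClosure L)).injective
    rw [trace_eq_sum_embeddings (AlgebraicClosure L)]
    simp only [RingHom.coe_coe] at this
    rw [this]
    split_ifs <;> simp
  rw [hu, Finset.sum_mul, map_sum]
  have : ∀ r ∈ Finset.range (minpoly K y).natDegree,
      Algebra.trace K L (p.coeff r • (y ^ r / aeval y (derivative (minpoly K y))) * (minpolyDiv K y).coeff j)
      = if j = r then p.coeff r else 0 := by
    intro r hr
    rw [smul_mul_assoc, map_smul, key r (Finset.mem_range.1 hr)]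
    split_ifs <;> simp
  rw [Finset.sum_congr rfl this, Finset.sum_ite_eq]
  split_ifs with hj
  · rfl
  · rw [coeff_eq_zero_of_degree_lt]
    refine lt_of_lt_of_le hp ?_
    rw [degree_eq_natDegree (minpoly.ne_zero hyi)]
    exact Nat.cast_le.2 (by simpa using hj)

theorem trace_coeff_minpolyDiv {K L : Type*} [Field K] [Field L] [Algebra K L]
    [FiniteDimensional K L] [Algebra.IsSeparable K L] {y : L} (hy : Algebra.adjoin K {y} = ⊤) (j : ℕ) :
    Algebra.trace K L ((minpolyDiv K y).coeff j) = (derivative (minpoly K y)).coeff j := by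
  have := trace_mul_coeff_minpolyDiv hy 1 (derivative (minpoly K y))
    (degree_derivative_lt (minpoly.ne_zero (Algebra.IsIntegral.isIntegral y))) (by simp) j
  simpa using this

/-- total degree bound for a polynomial over a polynomial ring -/
def PD {k σ : Type*} [Field k] (e : ℕ) (p : (MvPolynomial σ k)[X]) : Prop :=
  ∀ j, p.coeff j ≠ 0 → (p.coeff j).totalDegree + j ≤ e

variable {k σ : Type*} [Field k]

section
variable {L : Type*} [Field L] [Algebra (MvPolynomial σ k) L]
    [IsFractionRing (MvPolynomial σ k) L]
variable {E : Type*} [Field E] [Algebra L E] [Algebra (MvPolynomial σ k) E]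
  [IsScalarTower (MvPolynomial σ k) L E]

theorem isDeg_aeval {t : MvPolynomial σ k} (ht : t.totalDegree = 1) {e : ℕ} {y : E} (hy : IsDeg L t 1 y)
    {p : (MvPolynomial σ k)[X]} (hp : PD e p) : IsDeg L t e (aeval y p) := by
  rw [aeval_eq_sum_range]
  refine IsDeg.sum ht _ fun i _ => ?_
  rw [Algebra.smul_def]
  by_cases h0 : p.coeff i = 0
  · rw [h0, map_zero, zero_mul]
    simpa using isDeg_algebraMap (L := L) (E := E) ht (e := e) 0 (by simp)
  have := hp i h0
  refine IsDeg.mono ht (IsDeg.mul ht (isDeg_algebraMap (L := L) (E := E) ht _ le_rfl) (hy.pow ht i)) (by omega)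

end

theorem core {L E₀ E : Type*} [Field L] [Algebra (MvPolynomial σ k) L]
    [IsFractionRing (MvPolynomial σ k) L] [CharZero k] [Field E₀] [Field E]
    [Algebra L E₀] [Algebra E₀ E] [Algebra L E] [IsScalarTower L E₀ E]
    [Algebra (MvPolynomial σ k) E₀] [IsScalarTower (MvPolynomial σ k) L E₀]
    [Algebra (MvPolynomial σ k) E] [IsScalarTower (MvPolynomial σ k) L E]
    [IsScalarTower (MvPolynomial σ k) E₀ E]
    [FiniteDimensional L E₀] [FiniteDimensional E₀ E]
    {y : E₀} (hy : Algebra.adjoin L {y} = ⊤)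
    (f : (MvPolynomial σ k)[X]) (hf : f.Monic) (hfm : minpoly L y = f.map (algebraMap _ L))
    (hfd : PD f.natDegree f) (β : E) (r e : ℕ) (a : ℕ → (MvPolynomial σ k)[X])
    (ha : ∀ i, PD e (a i))
    (hβ : β ^ r + ∑ i ∈ Finset.range r, algebraMap E₀ E (aeval y (a i)) * β ^ i = 0) :
    ∃ Q : (MvPolynomial σ k)[X], PD (f.natDegree + e) Q ∧
      aeval y Q = aeval y (derivative f) * Algebra.trace E₀ E β := by
  classical
  have : CharZero L := charZero_of_injective_algebraMap (IsFractionRing.injective (MvPolynomial σ k) L) 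
  have : FiniteDimensional L E := FiniteDimensional.trans L E₀ E
  have hyi : IsIntegral L y := Algebra.IsIntegral.isIntegral y
  have hnd : (minpoly L y).natDegree = f.natDegree := by rw [hfm, hf.natDegree_map]
  have hdf : aeval y (derivative (minpoly L y)) = aeval y (derivative f) := by
    rw [hfm, derivative_map, aeval_map_algebraMap]
  have hy0 : aeval y f = 0 := by
    rw [← aeval_map_algebraMap L, ← hfm, minpoly.aeval]
  set y' : E := algebraMap E₀ E y with hy'
  set q := Algebra.trace E₀ E β with hq
  set b := minpolyDiv L y with hb
  -- the key claim
  have claim : ∀ j < f.natDegree, ∃ Q : MvPolynomial σ k, Q.totalDegree + j ≤ f.natDegree + e ∧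
      algebraMap _ L Q = Algebra.trace L E₀ (q * b.coeff j) := by
    intro j hj
    have htr : Algebra.trace L E₀ (q * b.coeff j) = Algebra.trace L E (algebraMap E₀ E (b.coeff j) * β) := by
      rw [← Algebra.trace_trace (S := E₀) (T := E), ← Algebra.smul_def, map_smul, smul_eq_mul, mul_comm]
    have hay : ∀ i, algebraMap E₀ E (aeval y (a i)) = aeval y' (a i) := fun i => by
      rw [hy', aeval_algebraMap_apply]
    rw [htr]
    rcases isEmpty_or_nonempty σ with hσ | ⟨⟨s⟩⟩
    · have hyint : IsIntegral (MvPolynomial σ k) y := ⟨f, hf, hy0⟩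
      have hyint' : IsIntegral (MvPolynomial σ k) y' := hyint.algebraMap
      have hbint : ∀ n j, f.natDegree ≤ j + n → IsIntegral (MvPolynomial σ k) (b.coeff j) := by
        intro n
        induction n with
        | zero =>
          intro j hj
          rw [coeff_eq_zero_of_natDegree_lt]
          · exact isIntegral_zero
          · rw [← hnd] at hj
            exact (natDegree_minpolyDiv_lt hyi).trans_le hj
        | succ n ih =>
          intro j hj
          rw [hb, coeff_minpolyDiv, hfm, coeff_map, ← IsScalarTower.algebraMap_apply]
          exact isIntegral_algebraMap.add ((ih (j+1) (by omega)).mul hyint)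
      have hβint : IsIntegral (MvPolynomial σ k) β := by
        refine integral_of_rel β r _ (fun i _ => ?_) hβ
        rw [aeval_eq_sum_range]
        refine IsIntegral.algebraMap (IsIntegral.sum _ fun i _ => ?_)
        rw [Algebra.smul_def]
        exact isIntegral_algebraMap.mul (hyint.pow _)
      obtain ⟨Q, hQ⟩ := IsIntegrallyClosed.isIntegral_iff.1 (Algebra.isIntegral_trace (R := MvPolynomial σ k) (L := L) (((hbint _ j le_add_self).algebraMap (B := E)).mul hβint))
      refine ⟨Q, ?_, hQ⟩
      have : Q.totalDegree = 0 := by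
        rw [MvPolynomial.eq_C_of_isEmpty Q, MvPolynomial.totalDegree_C]
      omega
    · set t : MvPolynomial σ k := MvPolynomial.X s with ht'
      have ht : t.totalDegree = 1 := MvPolynomial.totalDegree_X s
      have hydeg : ∀ (F : Type _) [Field F] [Algebra L F] [Algebra (MvPolynomial σ k) F]
        [IsScalarTower (MvPolynomial σ k) L F] (z : F) , aeval z f = 0 → IsDeg L t 1 z := by
        intro F _ _ _ _ z hz
        refine IsDeg.of_rel ht z f.natDegree (fun i => algebraMap _ F (f.coeff i)) ?_ ?_
        · intro i hi
          apply isDeg_algebraMap ht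
          by_cases h0 : f.coeff i = 0
          · simp [h0]
          have := hfd i h0
          omega
        · rw [aeval_eq_sum_range, Finset.sum_range_succ, hf.coeff_natDegree, one_smul] at hz
          rw [← hz, add_comm]
          congr 1
          exact Finset.sum_congr rfl fun i _ => by rw [Algebra.smul_def]
      have hyd := hydeg E y' (by rw [hy', aeval_algebraMap_apply, hy0, map_zero])
      have hbdeg : ∀ n j, f.natDegree ≤ j + n + 1 → IsDeg L t n (algebraMap E₀ E (b.coeff j)) := by
        intro n
        induction n with
        | zero =>
          intro j hj
          rw [hb, coeff_minpolyDiv, hfm, coeff_map, coeff_eq_zero_of_natDegree_lt (p := minpolyDiv L y) (n := j + 1), zero_mul, add_zero,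
            ← IsScalarTower.algebraMap_apply, ← IsScalarTower.algebraMap_apply]
          · apply isDeg_algebraMap ht
            by_cases h0 : f.coeff (j+1) = 0
            · simp [h0]
            have := hfd _ h0
            omega
          · rw [← hnd] at hj
            exact (natDegree_minpolyDiv_lt hyi).trans_le (by omega)
        | succ n ih =>
          intro j hj
          rw [hb, coeff_minpolyDiv, hfm, coeff_map, map_add, map_mul, ← IsScalarTower.algebraMap_apply,
            ← IsScalarTower.algebraMap_apply]
          refine IsDeg.add ht ?_ (IsDeg.mul ht (ih (j+1) (by omega)) hyd)
          apply isDeg_algebraMap ht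
          by_cases h0 : f.coeff (j+1) = 0
          · simp [h0]
          have := hfd _ h0
          omega
      have hβd : IsDeg L t e β := by
        refine IsDeg.of_rel ht β r _ (fun i hi => ?_) hβ
        rw [hay]
        refine IsDeg.mono ht (isDeg_aeval ht hyd (ha i)) ?_
        exact Nat.le_mul_of_pos_right _ (by omega)
      obtain ⟨Q, hQ, hQd⟩ := IsDeg.trace ht (IsDeg.mul ht (hbdeg (f.natDegree - 1 - j) j (by omega)) hβd)
      exact ⟨Q, by omega, hQ⟩
  choose! Q hQd hQ using claim
  refine ⟨∑ j ∈ Finset.range f.natDegree, C (Q j) * X ^ j, ?_, ?_⟩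
  · intro j hj
    have hc : (∑ j ∈ Finset.range f.natDegree, C (Q j) * X ^ j).coeff j = if j < f.natDegree then Q j else 0 := by
      simp [finsetSum_coeff, coeff_C_mul, coeff_X_pow]
    rw [hc] at hj ⊢
    split_ifs at hj ⊢ with h
    · exact hQd j h
    · exact absurd rfl hj
  · -- Euler
    obtain ⟨p₀, hp₀⟩ : ∃ p₀ : L[X], aeval y p₀ = q * aeval y (derivative (minpoly L y)) := by
      have : q * aeval y (derivative (minpoly L y)) ∈ Algebra.adjoin L {y} := by rw [hy]; trivial
      rwa [Algebra.adjoin_singleton_eq_range_aeval] at this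
    set p := p₀ %ₘ minpoly L y with hpdef
    have hp : p.degree < (minpoly L y).degree := degree_modByMonic_lt _ (minpoly.monic hyi)
    have hp1 : aeval y p = q * aeval y (derivative (minpoly L y)) := by
      rw [← hp₀, hpdef, aeval_modByMonic_eq_self_of_root (minpoly.aeval L y)]
    have hco := trace_mul_coeff_minpolyDiv hy q p hp hp1
    rw [← hdf, mul_comm, ← hp1, aeval_eq_sum_range' (p := p) (n := f.natDegree)]
    · rw [map_sum]
      refine Finset.sum_congr rfl fun j hj => ?_
      rw [← hco, ← hQ j (Finset.mem_range.1 hj), map_mul, map_pow, aeval_C, aeval_X, Algebra.smul_def, ← IsScalarTower.algebraMap_apply]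
    · by_cases hp0 : p = 0
      · rw [hp0, ← hnd]
        simpa using minpoly.natDegree_pos hyi
      rw [← hnd]
      exact natDegree_lt_natDegree hp0 hp

end DHO

namespace DHO
open Polynomial

section filt
variable {k τ : Type*} [Field k] {B : Type*} [CommRing B] [Algebra k B]

theorem aeval_mem_filt (Fil : ℕ → Submodule k B) (h1 : (1 : B) ∈ Fil 0)
    (hmul : ∀ a b x y, x ∈ Fil a → y ∈ Fil b → x * y ∈ Fil (a + b))
    (hmono : ∀ a b, a ≤ b → Fil a ≤ Fil b) (g : τ → B) (hg : ∀ l, g l ∈ Fil 1)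
    (p : MvPolynomial τ k) (e : ℕ) (hp : p.totalDegree ≤ e) : MvPolynomial.aeval g p ∈ Fil e := by
  classical
  rw [MvPolynomial.aeval_def, MvPolynomial.eval₂_eq]
  refine Submodule.sum_mem _ fun s hs => ?_
  rw [← Algebra.smul_def]
  refine Submodule.smul_mem _ _ ?_
  have hpow : ∀ l n, g l ^ n ∈ Fil n := by
    intro l n
    induction n with
    | zero => simpa using h1
    | succ n ih => rw [pow_succ]; exact hmul _ _ _ _ ih (hg l)
  have hprod : ∀ t : Finset τ, ∏ i ∈ t, g i ^ s i ∈ Fil (∑ i ∈ t, s i) := by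
    intro t
    induction t using Finset.induction_on with
    | empty => simpa using h1
    | insert a t ha ih =>
      rw [Finset.prod_insert ha, Finset.sum_insert ha]
      exact hmul _ _ _ _ (hpow _ _) ih
  refine hmono _ _ ?_ (hprod _)
  exact (MvPolynomial.le_totalDegree hs).trans hp
end filt

section PDsec
variable {k σ : Type*} [Field k]

theorem pd_zero (e : ℕ) : PD e (0 : (MvPolynomial σ k)[X]) := fun j h => absurd (by simp) h

theorem PD.add {e : ℕ} {p q : (MvPolynomial σ k)[X]} (hp : PD e p) (hq : PD e q) : PD e (p + q) := by
  intro j hj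
  rw [coeff_add] at hj ⊢
  by_cases h1 : p.coeff j = 0
  · rw [h1, zero_add] at hj ⊢; exact hq j hj
  by_cases h2 : q.coeff j = 0
  · rw [h2, add_zero] at hj ⊢; exact hp j hj
  have := MvPolynomial.totalDegree_add (p.coeff j) (q.coeff j)
  have := hp j h1
  have := hq j h2
  omega

theorem PD.mul {a b : ℕ} {p q : (MvPolynomial σ k)[X]} (hp : PD a p) (hq : PD b q) : PD (a + b) (p * q) := by
  classical
  have hs : ∀ j, ∀ t : Finset (ℕ × ℕ), (∀ x ∈ t, x.1 + x.2 = j) →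
      (∑ x ∈ t, p.coeff x.1 * q.coeff x.2) ≠ 0 →
      (∑ x ∈ t, p.coeff x.1 * q.coeff x.2).totalDegree + j ≤ a + b := by
    intro j t ht
    induction t using Finset.induction_on with
    | empty => intro h; simp at h
    | insert x t hx ih =>
      have ih := ih (fun x hx => ht x (by simp [hx]))
      have hxj := ht x (by simp)
      rw [Finset.sum_insert hx]
      intro h
      have one : p.coeff x.1 * q.coeff x.2 ≠ 0 → (p.coeff x.1 * q.coeff x.2).totalDegree + j ≤ a + b := by
        intro h0
        have h1 := hp _ (left_ne_zero_of_mul h0)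
        have h2 := hq _ (right_ne_zero_of_mul h0)
        have := MvPolynomial.totalDegree_mul (p.coeff x.1) (q.coeff x.2)
        omega
      by_cases h1 : p.coeff x.1 * q.coeff x.2 = 0
      · rw [h1, zero_add] at h ⊢; exact ih h
      by_cases h2 : (∑ x ∈ t, p.coeff x.1 * q.coeff x.2) = 0
      · rw [h2, add_zero] at h ⊢; exact one h
      have h3 := MvPolynomial.totalDegree_add (p.coeff x.1 * q.coeff x.2) (∑ x ∈ t, p.coeff x.1 * q.coeff x.2)
      have h4 := one h1
      have h5 := ih h2
      omega
  intro j hj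
  rw [coeff_mul] at hj ⊢
  exact hs j _ (fun x hx => Finset.HasAntidiagonal.mem_antidiagonal.1 hx) hj

/-- The submodule of polynomials of bounded degree. -/
def PDsub (k σ : Type*) [Field k] (e : ℕ) : Submodule k ((MvPolynomial σ k)[X]) where
  carrier := {p | PD e p}
  zero_mem' := pd_zero e
  add_mem' := fun hp hq => PD.add hp hq
  smul_mem' := by
    intro c p hp j hj
    rw [coeff_smul] at hj ⊢
    have h0 : p.coeff j ≠ 0 := by rintro h; rw [h, smul_zero] at hj; exact hj rfl
    have := hp j h0
    have := MvPolynomial.totalDegree_smul_le c (p.coeff j)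
    omega

theorem pd_lin (c : k) (q : MvPolynomial σ k) (hq : q.totalDegree ≤ 1) :
    PD 1 (C q + C (MvPolynomial.C c) * X : (MvPolynomial σ k)[X]) := by
  apply PD.add
  · intro j hj
    rw [coeff_C] at hj ⊢
    split_ifs at hj ⊢ with h
    · omega
    · exact absurd rfl hj
  · intro j hj
    rw [coeff_C_mul_X] at hj ⊢
    split_ifs at hj ⊢ with h
    · simp [h]
    · exact absurd rfl hj
end PDsec

section lin
variable {k τ : Type*} [Field k] [DecidableEq τ]

/-- Linear change of variables, with the direction `v` as the last variable. -/
noncomputable def psi (v : τ → k) (i : τ) : MvPolynomial τ k →ₐ[k] (MvPolynomial {l // l ≠ i} k)[X] :=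
  MvPolynomial.aeval (fun l => C (if h : l ≠ i then MvPolynomial.X ⟨l, h⟩ else 0) + C (MvPolynomial.C (v l)) * X)

/-- Inverse of `psi`, on coefficients. -/
noncomputable def phi0 (v : τ → k) (i : τ) : MvPolynomial {l // l ≠ i} k →ₐ[k] MvPolynomial τ k :=
  MvPolynomial.aeval (fun l => MvPolynomial.X l.1 - MvPolynomial.C (v l.1 / v i) * MvPolynomial.X i)

/-- Inverse of `psi`. -/
noncomputable def phi (v : τ → k) (i : τ) : (MvPolynomial {l // l ≠ i} k)[X] →+* MvPolynomial τ k :=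
  eval₂RingHom (phi0 v i).toRingHom (MvPolynomial.C (v i)⁻¹ * MvPolynomial.X i)

theorem phi_C (v : τ → k) (i : τ) (q) : phi v i (C q) = phi0 v i q := by simp [phi]
theorem phi_X (v : τ → k) (i : τ) : phi v i X = MvPolynomial.C (v i)⁻¹ * MvPolynomial.X i := by simp [phi]
theorem phi0_C (v : τ → k) (i : τ) (c : k) : phi0 v i (MvPolynomial.C c) = MvPolynomial.C c := by
  simp [phi0, MvPolynomial.algebraMap_eq]

theorem phi_psi (v : τ → k) (i : τ) (hi : v i ≠ 0) (p : MvPolynomial τ k) : phi v i (psi v i p) = p := by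
  have : ((phi v i).comp (psi v i).toRingHom) = RingHom.id _ := by
    apply MvPolynomial.ringHom_ext
    · intro c
      have : (psi v i) (MvPolynomial.C c) = C (MvPolynomial.C c) := by
        rw [psi, MvPolynomial.aeval_C]; rfl
      simp [this, phi_C, phi0_C]
    · intro l
      simp only [psi, AlgHom.toRingHom_eq_coe, RingHom.coe_comp, RingHom.coe_coe, Function.comp_apply,
        MvPolynomial.aeval_X, map_add, map_mul, phi_C, phi_X, phi0_C, RingHom.id_apply]
      split_ifs with h
      · simp only [phi0, MvPolynomial.aeval_X]
        rw [← mul_assoc, ← MvPolynomial.C_mul, div_eq_mul_inv]; ring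
      · have h : l = i := by simpa using h
        subst h
        rw [map_zero, zero_add, ← mul_assoc, ← MvPolynomial.C_mul, mul_inv_cancel₀ hi, MvPolynomial.C_1, one_mul]
  exact RingHom.congr_fun this p

theorem psi_C (v : τ → k) (i : τ) (c : k) : psi v i (MvPolynomial.C c) = C (MvPolynomial.C c) := by
  rw [psi, MvPolynomial.aeval_C]; rfl

theorem psi_phi (v : τ → k) (i : τ) (hi : v i ≠ 0) (p) : psi v i (phi v i p) = p := by
  have : ((psi v i).toRingHom.comp (phi v i)) = RingHom.id _ := by
    apply Polynomial.ringHom_ext'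
    · apply MvPolynomial.ringHom_ext
      · intro c
        simp [phi_C, phi0_C, psi_C]
      · intro l
        have h := l.2
        simp only [AlgHom.toRingHom_eq_coe, RingHom.coe_comp, RingHom.coe_coe, Function.comp_apply,
          phi_C, phi0, MvPolynomial.aeval_X, map_sub, map_mul, psi_C, RingHom.id_apply]
        simp only [psi, MvPolynomial.aeval_X]
        rw [dif_pos h, dif_neg (by simp), map_zero, zero_add, ← mul_assoc, ← map_mul, ← map_mul, div_mul_cancel₀ _ hi]
        ring
    · simp only [AlgHom.toRingHom_eq_coe, RingHom.coe_comp, RingHom.coe_coe, Function.comp_apply,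
          phi_X, map_mul, psi_C, RingHom.id_apply]
      simp only [psi, MvPolynomial.aeval_X]
      rw [dif_neg (by simp), map_zero, zero_add, ← mul_assoc, ← map_mul, ← map_mul, inv_mul_cancel₀ hi]
      simp
  exact RingHom.congr_fun this p

theorem psi_pd (v : τ → k) (i : τ) (p : MvPolynomial τ k) (e : ℕ) (hp : p.totalDegree ≤ e) : PD e (psi v i p) := by
  refine aeval_mem_filt (PDsub k {l // l ≠ i}) ?_ (fun a b x y hx hy => PD.mul hx hy) ?_ _ ?_ p e hp
  · intro j hj
    rw [coeff_one] at hj ⊢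
    split_ifs at hj ⊢ with h
    · simp [h]
    · exact absurd rfl hj
  · intro a b h p hp j hj
    exact (hp j hj).trans h
  · intro l
    apply pd_lin
    split_ifs <;> simp

theorem phi_deg (v : τ → k) (i : τ) (p) (e : ℕ) (hp : PD e p) : (phi v i p).totalDegree ≤ e := by
  have hX : ∀ (c : k) (l : τ), (MvPolynomial.C c * MvPolynomial.X l : MvPolynomial τ k).totalDegree ≤ 1 := by
    intro c l
    refine (MvPolynomial.totalDegree_mul _ _).trans ?_
    simp
  have h0 : ∀ q, (phi0 v i q).totalDegree ≤ q.totalDegree := by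
    intro q
    have := aeval_mem_filt (fun e => MvPolynomial.restrictTotalDegree τ k e)
      (by simp [MvPolynomial.mem_restrictTotalDegree])
      (by
        intro a b x y hx hy
        simp only [MvPolynomial.mem_restrictTotalDegree] at hx hy ⊢
        exact (MvPolynomial.totalDegree_mul _ _).trans (add_le_add hx hy))
      (by
        intro a b h x hx
        simp only [MvPolynomial.mem_restrictTotalDegree] at hx ⊢
        exact hx.trans h)
      (fun l : {l // l ≠ i} => MvPolynomial.X l.1 - MvPolynomial.C (v l.1 / v i) * MvPolynomial.X i)
      (by
        intro l
        simp only [MvPolynomial.mem_restrictTotalDegree]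
        refine (MvPolynomial.totalDegree_sub _ _).trans (max_le ?_ (hX _ _))
        simp) q _ le_rfl
    rw [MvPolynomial.mem_restrictTotalDegree] at this
    exact this
  have : phi v i p = ∑ j ∈ p.support, phi0 v i (p.coeff j) * (MvPolynomial.C (v i)⁻¹ * MvPolynomial.X i) ^ j := by
    rw [phi, coe_eval₂RingHom, eval₂_eq_sum, Polynomial.sum]
    rfl
  rw [this]
  refine MvPolynomial.totalDegree_finsetSum_le fun j hj => ?_
  have h1 := hp j (by simpa using hj)
  refine (MvPolynomial.totalDegree_mul _ _).trans ?_
  have h2 := MvPolynomial.totalDegree_pow (MvPolynomial.C (v i)⁻¹ * MvPolynomial.X i : MvPolynomial τ k) j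
  have h3 := Nat.mul_le_mul_left j (hX (v i)⁻¹ i)
  have h4 := h0 (p.coeff j)
  omega

theorem derivative_psi [Fintype τ] (v : τ → k) (i : τ) (p : MvPolynomial τ k) :
    derivative (psi v i p) = psi v i (∑ l, MvPolynomial.C (v l) * MvPolynomial.pderiv l p) := by
  induction p using MvPolynomial.induction_on with
  | C a => simp [psi_C]
  | add p q hp hq =>
    simp only [map_add, hp, hq, mul_add, Finset.sum_add_distrib]
  | mul_X p l hp =>
    have h1 : derivative (psi v i (MvPolynomial.X l)) = C (MvPolynomial.C (v l)) := by
      simp [psi]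
    rw [map_mul, derivative_mul, hp, h1, ← psi_C v i, ← map_mul, ← map_mul, ← map_add]
    congr 1
    simp only [MvPolynomial.pderiv_mul, MvPolynomial.pderiv_X, mul_add, Finset.sum_add_distrib]
    congr 1
    · rw [Finset.sum_mul]
      exact Finset.sum_congr rfl fun _ _ => by ring
    · rw [Finset.sum_eq_single l]
      · simp; ring
      · intro b _ hb
        rw [Pi.single_eq_of_ne (Ne.symm hb)]; simp
      · simp

theorem ray_coeff (v : τ → k) (p : MvPolynomial τ k) (d : ℕ) :
    (MvPolynomial.aeval (fun l => C (v l) * X : τ → k[X]) p).coeff d =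
      MvPolynomial.eval v (MvPolynomial.homogeneousComponent d p) := by
  induction p using MvPolynomial.induction_on' with
  | add p q hp hq => simp only [map_add, coeff_add, hp, hq]
  | monomial s c =>
    have h1 : MvPolynomial.aeval (fun l => C (v l) * X : τ → k[X]) (MvPolynomial.monomial s c)
      = C (c * s.prod fun l n => v l ^ n) * X ^ s.degree := by
      rw [MvPolynomial.aeval_monomial]
      simp only [mul_pow, Finsupp.prod, Finset.prod_mul_distrib, Finset.prod_pow_eq_pow_sum, map_mul, map_prod, map_pow]
      rw [mul_assoc]
      rfl
    rw [h1, coeff_C_mul_X_pow]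
    split_ifs with h
    · rw [MvPolynomial.homogeneousComponent_of_mem (MvPolynomial.isHomogeneous_monomial c h.symm)]
      simp [MvPolynomial.eval_monomial, h]
    · rw [MvPolynomial.homogeneousComponent_of_mem (MvPolynomial.isHomogeneous_monomial c rfl), if_neg h]
      simp

theorem psi_lead (v : τ → k) (i : τ) (p : MvPolynomial τ k) :
    (psi v i p).coeff p.totalDegree = MvPolynomial.C (MvPolynomial.eval v (MvPolynomial.homogeneousComponent p.totalDegree p)) := by
  have h1 : ((psi v i p).coeff p.totalDegree).totalDegree = 0 := by
    by_cases h0 : (psi v i p).coeff p.totalDegree = 0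
    · simp [h0]
    have := psi_pd v i p _ le_rfl _ h0
    omega
  rw [MvPolynomial.totalDegree_eq_zero_iff_eq_C] at h1
  rw [h1]
  congr 1
  rw [← ray_coeff]
  have h2 : ((Polynomial.mapRingHom (MvPolynomial.constantCoeff)).comp (psi v i).toRingHom) =
    (MvPolynomial.aeval (fun l => C (v l) * X : τ → k[X])).toRingHom := by
    apply MvPolynomial.ringHom_ext
    · intro c
      simp [psi_C]
    · intro l
      simp [psi]
      split_ifs <;> simp
  have h3 := RingHom.congr_fun h2 p
  have h4 := congrArg (fun q => q.coeff p.totalDegree) h3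
  simpa [MvPolynomial.constantCoeff_eq] using h4

end lin
end DHO

namespace DHO
open Polynomial

theorem dirT {k τ κ E : Type*} [Field k] [CharZero k] [Fintype τ] [Field κ] [Field E] [Algebra κ E]
    [FiniteDimensional κ E] (π : MvPolynomial τ k →+* κ) (f : MvPolynomial τ k) (hf : Irreducible f)
    (hker : ∀ a, π a = 0 ↔ f ∣ a) (hsurj : ∀ x : κ, ∃ a b, π b ≠ 0 ∧ x * π b = π a)
    (v : τ → k) (hv : MvPolynomial.eval v (MvPolynomial.homogeneousComponent f.totalDegree f) ≠ 0)
    (β : E) (r e : ℕ) (a : ℕ → MvPolynomial τ k) (ha : ∀ i, (a i).totalDegree ≤ e)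
    (hβ : β ^ r + ∑ i ∈ Finset.range r, algebraMap κ E (π (a i)) * β ^ i = 0) :
    ∃ Q : MvPolynomial τ k, Q.totalDegree ≤ f.totalDegree + e ∧
      π Q = π (∑ l, MvPolynomial.C (v l) * MvPolynomial.pderiv l f) * Algebra.trace κ E β := by
  classical
  set d := f.totalDegree with hd
  set c := MvPolynomial.eval v (MvPolynomial.homogeneousComponent d f) with hc
  have hd0 : d ≠ 0 := by
    intro h0
    rw [hd, MvPolynomial.totalDegree_eq_zero_iff_eq_C] at h0
    have hne := hf.ne_zero
    apply hf.not_isUnit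
    rw [h0] at hne ⊢
    have : MvPolynomial.coeff 0 f ≠ 0 := by
      intro h; rw [h] at hne; simp at hne
    exact (this.isUnit).map MvPolynomial.C
  obtain ⟨i, hi⟩ : ∃ i, v i ≠ 0 := by
    by_contra! h
    have hv0 : v = 0 := funext h
    apply hv
    rw [hc, ← ray_coeff, hv0]
    have : (fun l => C ((0 : τ → k) l) * X : τ → k[X]) = fun _ => 0 := by
      funext l; simp
    rw [this]
    have := MvPolynomial.aeval_zero' (R := k) (S₁ := k[X]) f
    rw [this, Polynomial.algebraMap_apply, coeff_C, if_neg hd0]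
  set g : (MvPolynomial {l // l ≠ i} k)[X] := C (MvPolynomial.C c⁻¹) * psi v i f with hg
  have hgd : g.natDegree ≤ d := by
    rw [natDegree_le_iff_coeff_eq_zero]
    intro N hN
    rw [hg, coeff_C_mul]
    by_contra h
    have := psi_pd v i f _ le_rfl N (right_ne_zero_of_mul h)
    omega
  have hgc : g.coeff d = 1 := by
    rw [hg, coeff_C_mul, psi_lead, ← MvPolynomial.C_mul, inv_mul_cancel₀ hv, MvPolynomial.C_1]
  have hgm : g.Monic := monic_of_natDegree_le_of_coeff_eq_one d hgd hgc
  have hgn : g.natDegree = d := by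
    refine le_antisymm hgd (le_natDegree_of_ne_zero ?_)
    rw [hgc]; exact one_ne_zero
  have hgpd : PD d g := by
    have : g = c⁻¹ • psi v i f := by
      rw [hg, ← psi_C v i, ← MvPolynomial.algebraMap_eq, AlgHom.commutes, Algebra.smul_def]
    rw [this]
    exact (PDsub k {l // l ≠ i} d).smul_mem _ (psi_pd v i f _ le_rfl)
  have hphig : phi v i g = MvPolynomial.C c⁻¹ * f := by
    rw [hg, map_mul, phi_C, phi0_C, phi_psi v i hi]
  have hcu : IsUnit (MvPolynomial.C c⁻¹ : MvPolynomial τ k) := (inv_ne_zero hv).isUnit.map MvPolynomial.C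
  let eqv : MvPolynomial τ k ≃+* (MvPolynomial {l // l ≠ i} k)[X] :=
    { toFun := psi v i
      invFun := phi v i
      left_inv := phi_psi v i hi
      right_inv := psi_phi v i hi
      map_mul' := map_mul _
      map_add' := map_add _ }
  have hgirr : Irreducible g := by
    have h1 : Irreducible (psi v i f) := (MulEquiv.irreducible_iff eqv).2 hf
    have hcu' : IsUnit (C (MvPolynomial.C c⁻¹) : (MvPolynomial {l // l ≠ i} k)[X]) :=
      ((inv_ne_zero hv).isUnit.map MvPolynomial.C).map C
    rw [hg]
    exact (irreducible_isUnit_mul hcu').2 h1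
  let A' := MvPolynomial {l // l ≠ i} k
  let L := FractionRing A'
  letI : Algebra A' κ := (π.comp ((phi v i).comp C)).toAlgebra
  have halg : ∀ q : A', algebraMap A' κ q = π (phi v i (C q)) := fun q => rfl
  have hinj : Function.Injective (algebraMap A' κ) := by
    rw [injective_iff_map_eq_zero]
    intro q hq
    rw [halg, hker] at hq
    obtain ⟨w, hw⟩ := hq
    have h2 : C q = psi v i f * psi v i w := by
      rw [← map_mul, ← hw, psi_phi v i hi]
    by_contra hq0
    have h3 : g ∣ C q := ⟨C (MvPolynomial.C c) * psi v i w, by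
      rw [h2, hg]
      have : (C (MvPolynomial.C c⁻¹) * C (MvPolynomial.C c) : A'[X]) = 1 := by
        rw [← map_mul, ← map_mul, inv_mul_cancel₀ hv]; simp
      calc _ = (C (MvPolynomial.C c⁻¹) * C (MvPolynomial.C c) : A'[X]) * (psi v i f * psi v i w) := by rw [this, one_mul]
        _ = _ := by ring⟩
    have h4 := natDegree_le_of_dvd h3 (by simpa using hq0)
    rw [hgn, natDegree_C] at h4
    omega
  letI : Algebra L κ := (IsFractionRing.lift (K := L) hinj).toAlgebra
  haveI t1 : IsScalarTower A' L κ := IsScalarTower.of_algebraMap_eq fun q => by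
    change _ = IsFractionRing.lift (K := L) hinj (algebraMap A' L q)
    rw [IsFractionRing.lift_algebraMap]
  letI : Algebra L E := ((algebraMap κ E).comp (algebraMap L κ)).toAlgebra
  haveI t2 : IsScalarTower L κ E := IsScalarTower.of_algebraMap_eq fun q => rfl
  letI : Algebra A' E := ((algebraMap κ E).comp (algebraMap A' κ)).toAlgebra
  haveI t3 : IsScalarTower A' κ E := IsScalarTower.of_algebraMap_eq fun q => rfl
  haveI t4 : IsScalarTower A' L E := IsScalarTower.of_algebraMap_eq fun q => by
    rw [IsScalarTower.algebraMap_apply A' κ E, IsScalarTower.algebraMap_apply A' L κ, IsScalarTower.algebraMap_apply L κ E]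
  set y : κ := π (phi v i X) with hy
  have hae : ∀ p : A'[X], aeval y p = π (phi v i p) := by
    intro p
    have : ((aeval y : A'[X] →ₐ[A'] κ) : A'[X] →+* κ) = π.comp (phi v i) := by
      apply Polynomial.ringHom_ext
      · intro q
        simp only [RingHom.coe_coe, aeval_C, halg, RingHom.coe_comp, Function.comp_apply]
      · simp only [RingHom.coe_coe, aeval_X, hy, RingHom.coe_comp, Function.comp_apply]
    exact RingHom.congr_fun this p
  have hgy : aeval y g = 0 := by
    rw [hae, hphig, hker]; exact dvd_mul_left _ _
  have hmin : minpoly L y = g.map (algebraMap A' L) := by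
    symm
    apply minpoly.eq_of_irreducible_of_monic
    · exact (hgm.irreducible_iff_irreducible_map_fraction_map).1 hgirr
    · rw [aeval_map_algebraMap, hgy]
    · exact hgm.map _
  have hyint : IsIntegral L y := ⟨_, hgm.map (algebraMap A' L), by
    rw [← aeval_def, aeval_map_algebraMap, hgy]⟩
  have hpi : ∀ a, π a ∈ IntermediateField.adjoin L {y} := by
    intro a
    rw [← phi_psi v i hi a, ← hae, ← aeval_map_algebraMap L]
    exact IntermediateField.algebra_adjoin_le_adjoin L _ (aeval_mem_adjoin_singleton _ _)
  have htop : IntermediateField.adjoin L {y} = ⊤ := by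
    rw [eq_top_iff]
    intro x _
    obtain ⟨a, b, hb, hx⟩ := hsurj x
    have : x = π a / π b := by field_simp; exact hx
    rw [this]
    exact div_mem (hpi a) (hpi b)
  have hadj : Algebra.adjoin L {y} = ⊤ := by
    rw [← IntermediateField.adjoin_simple_toSubalgebra_of_isAlgebraic hyint.isAlgebraic, htop]; rfl
  haveI : FiniteDimensional L κ := by
    have h1 : FiniteDimensional L (IntermediateField.adjoin L {y}) := IntermediateField.adjoin.finiteDimensional hyint
    rw [htop] at h1
    exact Module.Finite.equiv (IntermediateField.topEquiv (F := L) (E := κ)).toLinearEquiv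
  obtain ⟨Q, hQd, hQ⟩ := core (L := L) hadj g hgm hmin (by rw [hgn]; exact hgpd) β r e (fun i' => psi v i (a i'))
    (fun i' => psi_pd v i _ _ (ha i')) (by
      simp only [hae, phi_psi v i hi]; exact hβ)
  refine ⟨MvPolynomial.C c * phi v i Q, ?_, ?_⟩
  · refine (MvPolynomial.totalDegree_mul _ _).trans ?_
    rw [MvPolynomial.totalDegree_C, zero_add, ← hgn]
    exact phi_deg v i Q _ hQd
  · rw [hae, hae, hg, derivative_C_mul, derivative_psi, map_mul (phi v i), phi_C, phi0_C, phi_psi v i hi, map_mul π] at hQ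
    rw [map_mul, hQ, ← mul_assoc, ← mul_assoc, ← map_mul π, ← MvPolynomial.C_mul, mul_inv_cancel₀ hv, MvPolynomial.C_1,
      map_one, one_mul]

theorem lemmaT {k τ κ E : Type*} [Field k] [CharZero k] [Fintype τ] [Field κ] [Field E] [Algebra κ E]
    [FiniteDimensional κ E] (π : MvPolynomial τ k →+* κ) (f : MvPolynomial τ k) (hf : Irreducible f)
    (hker : ∀ a, π a = 0 ↔ f ∣ a) (hsurj : ∀ x : κ, ∃ a b, π b ≠ 0 ∧ x * π b = π a)
    (β : E) (r e : ℕ) (a : ℕ → MvPolynomial τ k) (ha : ∀ i, (a i).totalDegree ≤ e)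
    (hβ : β ^ r + ∑ i ∈ Finset.range r, algebraMap κ E (π (a i)) * β ^ i = 0) (l : τ) :
    ∃ Q : MvPolynomial τ k, Q.totalDegree ≤ f.totalDegree + e ∧
      π Q = π (MvPolynomial.pderiv l f) * Algebra.trace κ E β := by
  classical
  set h := MvPolynomial.homogeneousComponent f.totalDegree f with hh
  have hne : h ≠ 0 := by
    intro h0
    have h1 := MvPolynomial.coeff_homogeneousComponent (n := f.totalDegree) (φ := f)
    obtain ⟨s, hs, hsd⟩ : ∃ s ∈ f.support, f.totalDegree = s.degree := by
      have hsup : f.support.Nonempty := by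
        rw [Finset.nonempty_iff_ne_empty]
        intro h; exact hf.ne_zero (MvPolynomial.support_eq_empty.1 h)
      obtain ⟨s, hs, h2⟩ := Finset.exists_mem_eq_sup f.support hsup (fun s => s.degree)
      exact ⟨s, hs, by rw [← h2]; rfl⟩
    have h2 := h1 s
    rw [← hh, h0, if_pos hsd.symm] at h2
    simp at h2
    exact (MvPolynomial.mem_support_iff.1 hs) h2.symm
  obtain ⟨v, hv⟩ : ∃ v, MvPolynomial.eval v h ≠ 0 := by
    by_contra! hcon
    exact hne (MvPolynomial.funext fun x => by rw [hcon x, map_zero])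
  -- a second good direction
  let line : k[X] := MvPolynomial.aeval (fun l' => C (v l') + C (if l' = l then 1 else 0) * X : τ → k[X]) h
  have hline : ∀ s : k, line.eval s = MvPolynomial.eval (fun l' => v l' + (if l' = l then 1 else 0) * s) h := by
    intro s
    have : (Polynomial.evalRingHom s).comp (MvPolynomial.aeval (fun l' => C (v l') + C (if l' = l then 1 else 0) * X : τ → k[X])).toRingHom
      = MvPolynomial.eval (fun l' => v l' + (if l' = l then 1 else 0) * s) := by
      apply MvPolynomial.ringHom_ext
      · intro c; simp
      · intro l'; simp; split_ifs <;> simp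
    exact RingHom.congr_fun this h
  have hl0 : line * X ≠ 0 := by
    apply mul_ne_zero _ X_ne_zero
    intro h0
    have := hline 0
    rw [h0] at this
    simp at this
    exact hv this.symm
  obtain ⟨s, hs⟩ : ∃ s, (line * X).eval s ≠ 0 := by
    by_contra! hcon
    exact hl0 (Polynomial.funext fun x => by rw [hcon x, eval_zero])
  rw [eval_mul, eval_X] at hs
  have hs0 := right_ne_zero_of_mul hs
  have hs1 := left_ne_zero_of_mul hs
  rw [hline] at hs1
  obtain ⟨Q₁, hd₁, hQ₁⟩ := dirT π f hf hker hsurj v hv β r e a ha hβ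
  obtain ⟨Q₂, hd₂, hQ₂⟩ := dirT π f hf hker hsurj _ hs1 β r e a ha hβ
  refine ⟨MvPolynomial.C s⁻¹ * (Q₂ - Q₁), ?_, ?_⟩
  · refine (MvPolynomial.totalDegree_mul _ _).trans ?_
    rw [MvPolynomial.totalDegree_C, zero_add]
    exact (MvPolynomial.totalDegree_sub _ _).trans (max_le hd₂ hd₁)
  · rw [map_mul, map_sub, hQ₁, hQ₂, ← sub_mul, ← map_sub, ← mul_assoc, ← map_mul]
    congr 2
    rw [← Finset.sum_sub_distrib, Finset.sum_eq_single l]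
    · rw [if_pos rfl, one_mul, MvPolynomial.C_add, add_mul, add_sub_cancel_left, ← mul_assoc, ← MvPolynomial.C_mul,
        inv_mul_cancel₀ hs0, MvPolynomial.C_1, one_mul]
    · intro b _ hb
      rw [if_neg hb]; simp
    · simp

end DHO

namespace DHO
open Polynomial

section Sfsec
variable {A K : Type*} [CommRing A] [IsDomain A] [Field K] [Algebra A K]

/-- The semi-local ring `A_(f)[z]`. -/
def Sf {f : A} (hf : Prime f) (z : K) : Subalgebra A K where
  carrier := {u | ∃ b : A, ¬ f ∣ b ∧ ∃ p : A[X], algebraMap A K b * u = aeval z p}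
  algebraMap_mem' := fun a => ⟨1, fun h => hf.not_unit (isUnit_of_dvd_one h), C a, by simp⟩
  mul_mem' := by
    rintro u v ⟨b, hb, p, hp⟩ ⟨b', hb', p', hp'⟩
    refine ⟨b * b', fun h => (hf.dvd_or_dvd h).elim hb hb', p * p', ?_⟩
    rw [map_mul, map_mul, ← hp, ← hp']; ring
  add_mem' := by
    rintro u v ⟨b, hb, p, hp⟩ ⟨b', hb', p', hp'⟩
    refine ⟨b * b', fun h => (hf.dvd_or_dvd h).elim hb hb', C b' * p + C b * p', ?_⟩
    rw [map_mul, map_add, map_mul, map_mul, ← hp, ← hp', aeval_C, aeval_C]; ring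

variable {f : A} (hf : Prime f) {z : K}

theorem aeval_mem_Sf (p : A[X]) : aeval z p ∈ Sf hf z :=
  ⟨1, fun h => hf.not_unit (isUnit_of_dvd_one h), p, by simp⟩

theorem mem_Sf_of_mul [FaithfulSMul A K] {b : A} (hb : ¬ f ∣ b) {u : K} (h : algebraMap A K b * u ∈ Sf hf z) : u ∈ Sf hf z := by
  obtain ⟨b', hb', p', hp'⟩ := h
  exact ⟨b' * b, fun h => (hf.dvd_or_dvd h).elim hb' hb, p', by rw [← hp', map_mul]; ring⟩

theorem mem_Sf_of_aeval [FaithfulSMul A K] {b : A} (hb : ¬ f ∣ b) {u : K} {p : A[X]} (h : algebraMap A K b * u = aeval z p) : u ∈ Sf hf z :=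
  ⟨b, hb, p, h⟩

theorem coeff_dvd_of_mem [FaithfulSMul A K] {F : A[X]} (hF : F.Monic) (hF1 : F.natDegree ≠ 0)
    (hdvd : ∀ p : A[X], aeval z p = 0 ↔ F ∣ p)
    {p : A[X]} (hp : p.natDegree < F.natDegree) {u : K} (hu : u ∈ Sf hf z)
    (h : aeval z p = algebraMap A K f * u) (j : ℕ) : f ∣ p.coeff j := by
  obtain ⟨b, hb, q, hq⟩ := hu
  have h1 : aeval z (q %ₘ F) = aeval z q := by
    rw [← sub_eq_zero, ← map_sub, hdvd]
    have := modByMonic_add_div q F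
    exact ⟨-(q /ₘ F), by linear_combination this⟩
  have h2 : aeval z (C b * p - C f * (q %ₘ F)) = 0 := by
    rw [map_sub, map_mul, map_mul, h1, ← hq, h, aeval_C, aeval_C]; ring
  rw [hdvd] at h2
  have h3 : C b * p - C f * (q %ₘ F) = 0 := by
    apply eq_zero_of_dvd_of_natDegree_lt h2
    refine (natDegree_sub_le _ _).trans_lt (max_lt ?_ ?_)
    · exact (natDegree_C_mul_le _ _).trans_lt hp
    · refine (natDegree_C_mul_le _ _).trans_lt (natDegree_modByMonic_lt _ hF ?_)
      rintro rfl; simp at hF1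
  have h4 := congrArg (fun q => q.coeff j) h3
  simp only [coeff_sub, coeff_C_mul, coeff_zero, sub_eq_zero] at h4
  exact (hf.dvd_or_dvd (Dvd.intro _ h4.symm)).resolve_left hb

/-- if `p(z) = f² u` with `u` regular, then `f²` divides all coefficients. -/
theorem coeff_dvd_sq_of_mem [FaithfulSMul A K] {F : A[X]} (hF : F.Monic) (hF1 : F.natDegree ≠ 0)
    (hdvd : ∀ p : A[X], aeval z p = 0 ↔ F ∣ p)
    {p : A[X]} (hp : p.natDegree < F.natDegree) {u : K} (hu : u ∈ Sf hf z)
    (h : aeval z p = algebraMap A K (f ^ 2) * u) : ∃ q : A[X], p = C (f ^ 2) * q := by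
  have hf0 : algebraMap A K f ≠ 0 := by simpa using hf.ne_zero
  have h1 : ∀ j, f ∣ p.coeff j := coeff_dvd_of_mem hf hF hF1 hdvd hp
    (mul_mem (Subalgebra.algebraMap_mem _ f) hu) (by rw [h, map_pow]; ring)
  obtain ⟨p', rfl⟩ := (C_dvd_iff_dvd_coeff f p).2 h1
  have hn : p'.natDegree < F.natDegree := by
    rwa [natDegree_C_mul hf.ne_zero] at hp
  have h2 : ∀ j, f ∣ p'.coeff j := coeff_dvd_of_mem hf hF hF1 hdvd hn hu (by
    rw [map_mul, aeval_C, map_pow] at h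
    apply mul_left_cancel₀ hf0
    rw [h]; ring)
  obtain ⟨p'', rfl⟩ := (C_dvd_iff_dvd_coeff f p').2 h2
  exact ⟨p'', by rw [pow_two, C_mul, mul_assoc]⟩

/-- derivations preserve `Sf`. -/
theorem deriv_mem_Sf [FaithfulSMul A K] {k : Type*} [Field k] [Algebra k K] (d : Derivation k K K)
    (hA : ∀ a : A, d (algebraMap A K a) ∈ Sf hf z) (hz : d z ∈ Sf hf z) {u : K} (hu : u ∈ Sf hf z) : d u ∈ Sf hf z := by
  have hp : ∀ p : A[X], d (aeval z p) ∈ Sf hf z := by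
    intro p
    induction p using Polynomial.induction_on' with
    | add p q hp hq => rw [map_add, map_add]; exact add_mem hp hq
    | monomial n a =>
      rw [aeval_monomial, d.leibniz, d.leibniz_pow]
      simp only [smul_eq_mul, nsmul_eq_mul]
      have hz' : z ∈ Sf hf z := by simpa using aeval_mem_Sf hf (z := z) X
      have hn : (n : K) ∈ Sf hf z := natCast_mem _ _
      refine add_mem (mul_mem (Subalgebra.algebraMap_mem _ _) (mul_mem hn (mul_mem (pow_mem hz' _) hz))) (mul_mem (pow_mem hz' _) (hA a))
  obtain ⟨b, hb, p, h⟩ := hu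
  apply mem_Sf_of_mul hf hb
  have h1 := congrArg d h
  rw [d.leibniz] at h1
  simp only [smul_eq_mul] at h1
  have : algebraMap A K b * d u = d (aeval z p) - u * d (algebraMap A K b) := by rw [← h1]; ring
  rw [this]
  exact sub_mem (hp p) (mul_mem ⟨b, hb, p, h⟩ (hA b))

/-- reduction modulo `f`. -/
theorem aeval_of_map_dvd {κ : Type*} [Field κ] (π : A →+* κ) (hker : ∀ a, π a = 0 ↔ f ∣ a)
    {F : A[X]} (hF : F.Monic) (hFz : aeval z F = 0) {p : A[X]} (h : F.map π ∣ p.map π) :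
    ∃ q : A[X], aeval z p = algebraMap A K f * aeval z q := by
  have h1 : (p %ₘ F).map π = 0 := by
    rw [map_modByMonic _ hF]
    exact (modByMonic_eq_zero_iff_dvd (hF.map π)).2 h
  have h2 : ∀ j, f ∣ (p %ₘ F).coeff j := by
    intro j
    rw [← hker, ← coeff_map, h1, coeff_zero]
  obtain ⟨q, hq⟩ := (C_dvd_iff_dvd_coeff f _).2 h2
  refine ⟨q, ?_⟩
  have := modByMonic_add_div p F
  rw [← this, map_add, map_mul, hFz, zero_mul, add_zero, hq, map_mul, aeval_C]

theorem exists_lift {κ : Type*} [Field κ] (π : A →+* κ) (hsurj : ∀ x : κ, ∃ a b, π b ≠ 0 ∧ x * π b = π a) (p : κ[X]) :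
    ∃ (b : A) (P : A[X]), π b ≠ 0 ∧ P.map π = C (π b) * p := by
  induction p using Polynomial.induction_on' with
  | add p q hp hq =>
    obtain ⟨b, P, hb, h⟩ := hp
    obtain ⟨b', P', hb', h'⟩ := hq
    refine ⟨b * b', C b' * P + C b * P', by rw [map_mul]; exact mul_ne_zero hb hb', ?_⟩
    rw [Polynomial.map_add, Polynomial.map_mul, Polynomial.map_mul, h, h', map_C, map_C, map_mul, C_mul]; ring
  | monomial n a =>
    obtain ⟨x, b, hb, h⟩ := hsurj a
    refine ⟨b, monomial n x, hb, ?_⟩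
    rw [map_monomial, ← h, C_mul_monomial, mul_comm]

end Sfsec

end DHO

namespace DHO
open Polynomial

/-- the universal `(F(Y) - F(X)) / (Y - X)`. -/
noncomputable def Wq {A : Type*} [CommRing A] (F : A[X]) : A[X][X] := (F.map C) /ₘ (X - C X)

theorem Wq_spec {A : Type*} [CommRing A] (F : A[X]) : Wq F * (X - C X) = F.map C - C F := by
  have h := modByMonic_add_div (F.map (C : A →+* A[X])) (X - C X)
  rw [modByMonic_X_sub_C_eq_C_eval] at h
  have h2 : eval X (F.map (C : A →+* A[X])) = F := by
    rw [eval_map, eval₂_C_X]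
  rw [h2] at h
  rw [Wq]; linear_combination h

theorem rel_exists {A K : Type*} [CommRing A] [IsDomain A] [Field K] [Algebra A K] {z : K} {F : A[X]} (hF : F.Monic)
    (hdvd : ∀ p : A[X], aeval z p = 0 ↔ F ∣ p) (B : A[X]) :
    ∃ (r : ℕ) (a : ℕ → A), F ∣ B ^ r + ∑ i ∈ Finset.range r, C (a i) * B ^ i := by
  have hz : IsIntegral A z := ⟨F, hF, (hdvd F).2 dvd_rfl⟩
  have hB : IsIntegral A (aeval z B) := by
    rw [aeval_eq_sum_range]
    refine IsIntegral.sum _ fun i _ => ?_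
    rw [Algebra.smul_def]
    exact isIntegral_algebraMap.mul (hz.pow _)
  obtain ⟨p, hp, h⟩ := hB
  refine ⟨p.natDegree, fun i => p.coeff i, ?_⟩
  rw [← hdvd, map_add, map_sum, ← h, ← aeval_def, aeval_eq_sum_range (p := p), Finset.sum_range_succ, add_comm, hp.coeff_natDegree, one_smul]
  congr 1
  · refine Finset.sum_congr rfl fun i _ => ?_
    rw [map_mul, aeval_C, map_pow, Algebra.smul_def]
  · rw [map_pow]

variable {k τ : Type*} [Field k] [CharZero k] [Fintype τ]

theorem unif_exists {K : Type*} [Field K] [Algebra (MvPolynomial τ k) K] {z : K} {F : (MvPolynomial τ k)[X]} (hF : F.Monic)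
    (hdvd : ∀ p : (MvPolynomial τ k)[X], aeval z p = 0 ↔ F ∣ p) :
    ∃ (e : ℕ) (r : ℕ → ℕ) (a : ℕ → ℕ → MvPolynomial τ k), ∀ j < F.natDegree, (∀ i, (a j i).totalDegree ≤ e) ∧
      F ∣ (Wq F).coeff j ^ r j + ∑ i ∈ Finset.range (r j), C (a j i) * (Wq F).coeff j ^ i := by
  classical
  choose r a h using fun j => rel_exists hF hdvd ((Wq F).coeff j)
  refine ⟨(Finset.range F.natDegree).sup fun j => (Finset.range (r j)).sup fun i => (a j i).totalDegree, r,
    fun j i => if i < r j then a j i else 0, fun j hj => ⟨fun i => ?_, ?_⟩⟩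
  · change (if i < r j then a j i else 0).totalDegree ≤ _
    split_ifs with hi
    · exact (Finset.le_sup (f := fun i => (a j i).totalDegree) (Finset.mem_range.2 hi)).trans
        (Finset.le_sup (f := fun j => (Finset.range (r j)).sup fun i => (a j i).totalDegree) (Finset.mem_range.2 hj))
    · simp
  · convert h j using 2
    refine Finset.sum_congr rfl fun i hi => ?_
    simp only [if_pos (Finset.mem_range.1 hi)]

theorem c_exists {κ E : Type*} [Field κ] [Field E] [Algebra κ E]
    [FiniteDimensional κ E] (π : MvPolynomial τ k →+* κ) (f : MvPolynomial τ k) (hf : Irreducible f)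
    (hker : ∀ a, π a = 0 ↔ f ∣ a) (hsurj : ∀ x : κ, ∃ a b, π b ≠ 0 ∧ x * π b = π a)
    (F : (MvPolynomial τ k)[X]) (hF1 : F.natDegree ≠ 0)
    (zb : E) (hzb : Algebra.adjoin κ {zb} = ⊤) (h : κ[X]) (hh : F.map π = minpoly κ zb * h)
    (e : ℕ) (r : ℕ → ℕ) (a : ℕ → ℕ → MvPolynomial τ k)
    (ha : ∀ j < F.natDegree, (∀ i, (a j i).totalDegree ≤ e) ∧
      F ∣ (Wq F).coeff j ^ r j + ∑ i ∈ Finset.range (r j), C (a j i) * (Wq F).coeff j ^ i) :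
    ∃ c : τ → (MvPolynomial τ k)[X], ∀ l, (c l).natDegree < F.natDegree ∧
      (∀ j, ((c l).coeff j).totalDegree ≤ f.totalDegree + e) ∧
      (c l).map π = C (π (MvPolynomial.pderiv l f)) * (derivative (minpoly κ zb) * h) := by
  classical
  have : CharZero κ := charZero_of_injective_ringHom (f := π.comp MvPolynomial.C) (RingHom.injective _)
  set g := minpoly κ zb with hg
  let ev : (MvPolynomial τ k)[X] →+* E := eval₂RingHom ((algebraMap κ E).comp π) zb
  have hevp : ∀ p, ev p = aeval zb (p.map π) := by
    intro p
    simp only [ev, coe_eval₂RingHom, aeval_def, eval₂_map]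
  have hFz : ev F = 0 := by
    rw [hevp, hh, map_mul, hg, minpoly.aeval, zero_mul]
  have hW : (Wq F).map ev = minpolyDiv κ zb * h.map (algebraMap κ E) := by
    apply mul_right_cancel₀ (X_sub_C_ne_zero zb)
    have h1 := congrArg (Polynomial.map ev) (Wq_spec F)
    have hevX : ev X = zb := by simp [ev]
    have hevC : ev.comp C = (algebraMap κ E).comp π := by
      ext <;> simp [ev]
    rw [Polynomial.map_mul, Polynomial.map_sub, Polynomial.map_sub, map_X, map_C, map_C, hFz, C_0, sub_zero, hevX, map_map, hevC, ← map_map, hh,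
      Polynomial.map_mul] at h1
    rw [h1, hg, ← minpolyDiv_spec κ zb]; ring
  have htr : ∀ j, Algebra.trace κ E (ev ((Wq F).coeff j)) = (derivative g * h).coeff j := by
    intro j
    rw [← coeff_map, hW, coeff_mul, map_sum, coeff_mul]
    refine Finset.sum_congr rfl fun x _ => ?_
    rw [coeff_map, mul_comm, ← Algebra.smul_def, map_smul, trace_coeff_minpolyDiv hzb, smul_eq_mul, mul_comm]
  have key : ∀ l, ∀ j < F.natDegree, ∃ Q : MvPolynomial τ k, Q.totalDegree ≤ f.totalDegree + e ∧
      π Q = π (MvPolynomial.pderiv l f) * (derivative g * h).coeff j := by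
    intro l j hj
    rw [← htr]
    refine lemmaT π f hf hker hsurj _ (r j) e (a j) (ha j hj).1 ?_ l
    obtain ⟨q, hq⟩ := (ha j hj).2
    have h2 := congrArg ev hq
    rw [map_mul, hFz, zero_mul, map_add, map_sum, map_pow] at h2
    rw [← h2]
    congr 1
    refine Finset.sum_congr rfl fun i _ => ?_
    rw [map_mul, map_pow]
    congr 1
    simp [ev]
  choose! Q hQd hQ using key
  have hcoef : ∀ l j, (∑ j ∈ Finset.range F.natDegree, C (Q l j) * X ^ j).coeff j = if j < F.natDegree then Q l j else 0 := by
    intro l j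
    simp [finsetSum_coeff, coeff_C_mul, coeff_X_pow]
  refine ⟨fun l => ∑ j ∈ Finset.range F.natDegree, C (Q l j) * X ^ j, fun l => ⟨?_, fun j => ?_, ?_⟩⟩
  · refine lt_of_le_of_lt ((natDegree_le_iff_coeff_eq_zero (n := F.natDegree - 1)).2 ?_) (show F.natDegree - 1 < F.natDegree by omega)
    intro N hN
    rw [hcoef, if_neg (by omega)]
  · rw [hcoef]
    split_ifs with hj
    · exact hQd l j hj
    · simp
  · ext j
    rw [coeff_map, hcoef, coeff_C_mul]
    split_ifs with hj
    · exact hQ l j hj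
    · rw [map_zero]
      -- degree bound
      have hgi : IsIntegral κ zb := Algebra.IsIntegral.isIntegral zb
      have hd : (derivative g * h).coeff j = 0 := by
        by_cases hg0 : h = 0
        · simp [hg0]
        apply coeff_eq_zero_of_natDegree_lt
        have h3 : (derivative g).natDegree < g.natDegree := natDegree_derivative_lt (minpoly.natDegree_pos hgi).ne'
        have h4 : (F.map π).natDegree = g.natDegree + h.natDegree := by
          rw [hh, natDegree_mul (minpoly.ne_zero hgi) hg0]
        have h5 := natDegree_map_le (f := π) (p := F)
        have h6 := natDegree_mul_le (p := derivative g) (q := h)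
        omega
      rw [hd, mul_zero]

end DHO

namespace DHO
open Polynomial

variable {k τ : Type*} [Field k] [Fintype τ] {K : Type*} [Field K]
  [Algebra (MvPolynomial τ k) K] [Algebra k K] [IsScalarTower k (MvPolynomial τ k) K]

theorem deriv_apply_poly (δ : Derivation k K K) (a : MvPolynomial τ k) :
    δ (algebraMap _ K a) = ∑ l, algebraMap _ K (MvPolynomial.pderiv l a) * δ (algebraMap (MvPolynomial τ k) K (MvPolynomial.X l)) := by
  classical
  induction a using MvPolynomial.induction_on with
  | C c =>
    rw [← MvPolynomial.algebraMap_eq, ← IsScalarTower.algebraMap_apply, δ.map_algebraMap]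
    simp
  | add p q hp hq => simp only [map_add, hp, hq, add_mul, Finset.sum_add_distrib]
  | mul_X p l hp =>
    simp only [map_mul, δ.leibniz, smul_eq_mul, hp, MvPolynomial.pderiv_mul, map_add, add_mul, Finset.sum_add_distrib]
    rw [add_comm]
    congr 1
    · rw [Finset.mul_sum]
      exact Finset.sum_congr rfl fun _ _ => by ring
    · rw [Finset.sum_eq_single l]
      · simp
      · intro b _ hb
        rw [MvPolynomial.pderiv_X, Pi.single_eq_of_ne (Ne.symm hb)]; simp
      · simp

/-- Lie derivative on one forms -/
noncomputable def Lop (der : τ → Derivation k K K) (δ : Derivation k K K) : (τ → K) →+ (τ → K) where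
  toFun x := fun l => δ (x l) + ∑ m, x m * der l (δ (algebraMap (MvPolynomial τ k) K (MvPolynomial.X m)))
  map_zero' := by funext l; simp
  map_add' x y := by
    funext l
    simp only [Pi.add_apply, map_add, add_mul, Finset.sum_add_distrib]
    ring

theorem Lop_apply (der : τ → Derivation k K K) (δ : Derivation k K K) (x : τ → K) (l : τ) :
  Lop der δ x l = δ (x l) + ∑ m, x m * der l (δ (algebraMap (MvPolynomial τ k) K (MvPolynomial.X m))) := rfl

theorem Lop_smul (der : τ → Derivation k K K) (δ : Derivation k K K) (c : K) (x : τ → K) :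
    Lop der δ (c • x) = δ c • x + c • Lop der δ x := by
  funext l
  simp only [Lop_apply, Pi.smul_apply, Pi.add_apply, smul_eq_mul, δ.leibniz, mul_add, Finset.mul_sum, mul_assoc]
  ring

theorem der_div (d : Derivation k K K) (a b : K) (hb : b ≠ 0) : d (a / b) = (b * d a - a * d b) / b ^ 2 := by
  have h1 : d a = d (a / b * b) := by rw [div_mul_cancel₀ _ hb]
  rw [d.leibniz] at h1
  simp only [smul_eq_mul] at h1
  rw [h1]; field_simp; ring

theorem pd_comm (l m : τ) (f : MvPolynomial τ k) :
    MvPolynomial.pderiv l (MvPolynomial.pderiv m f) = MvPolynomial.pderiv m (MvPolynomial.pderiv l f) := by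
  classical
  have h : ⁅(MvPolynomial.pderiv l : Derivation k (MvPolynomial τ k) (MvPolynomial τ k)), (MvPolynomial.pderiv m : Derivation k (MvPolynomial τ k) (MvPolynomial τ k))⁆ = 0 := by
    apply MvPolynomial.derivation_ext
    intro i
    rw [Derivation.commutator_apply]
    simp only [MvPolynomial.pderiv_X, Pi.single_apply]
    split_ifs <;> simp
  have := congrArg (fun d => d f) h
  simp only [Derivation.commutator_apply, Derivation.zero_apply, sub_eq_zero] at this
  exact this

theorem Lop_dlog (der : τ → Derivation k K K) (hder : ∀ l a, der l (algebraMap (MvPolynomial τ k) K a) = algebraMap _ K (MvPolynomial.pderiv l a))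
    (δ : Derivation k K K) (f : MvPolynomial τ k) (hf : algebraMap _ K f ≠ 0) (l : τ) :
    Lop der δ (fun l => algebraMap _ K (MvPolynomial.pderiv l f) / algebraMap _ K f) l =
      der l (δ (algebraMap _ K f) / algebraMap _ K f) := by
  rw [Lop_apply, der_div _ _ _ hf, der_div _ _ _ hf, deriv_apply_poly δ f, deriv_apply_poly δ (MvPolynomial.pderiv l f), map_sum]
  simp only [Derivation.leibniz, smul_eq_mul, hder]
  have hcomm : ∀ m, MvPolynomial.pderiv l (MvPolynomial.pderiv m f) = MvPolynomial.pderiv m (MvPolynomial.pderiv l f) :=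
    fun m => pd_comm l m f
  simp only [hcomm, Finset.sum_add_distrib]
  have e1 : ∑ m, algebraMap (MvPolynomial τ k) K (MvPolynomial.pderiv m f) / algebraMap _ K f *
      der l (δ (algebraMap (MvPolynomial τ k) K (MvPolynomial.X m))) =
      (∑ m, algebraMap (MvPolynomial τ k) K (MvPolynomial.pderiv m f) *
      der l (δ (algebraMap (MvPolynomial τ k) K (MvPolynomial.X m)))) / algebraMap _ K f := by
    rw [Finset.sum_div]
    exact Finset.sum_congr rfl fun _ _ => by ring
  have e2 : ∑ m, δ (algebraMap (MvPolynomial τ k) K (MvPolynomial.X m)) *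
        algebraMap (MvPolynomial τ k) K (MvPolynomial.pderiv m (MvPolynomial.pderiv l f)) =
      ∑ m, algebraMap (MvPolynomial τ k) K (MvPolynomial.pderiv m (MvPolynomial.pderiv l f)) *
        δ (algebraMap (MvPolynomial τ k) K (MvPolynomial.X m)) :=
    Finset.sum_congr rfl fun _ _ => by ring
  rw [e1, e2]
  field_simp
  ring

theorem reg (S : Subring K) (der : τ → Derivation k K K) (hder : ∀ l a, der l (algebraMap (MvPolynomial τ k) K a) = algebraMap _ K (MvPolynomial.pderiv l a))
    (δ : Derivation k K K) (hSder : ∀ l, ∀ u ∈ S, der l u ∈ S) (hSδ : ∀ u ∈ S, δ u ∈ S) (hSA : ∀ a, algebraMap (MvPolynomial τ k) K a ∈ S)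
    (f : MvPolynomial τ k) (hf : algebraMap _ K f ≠ 0) (x : τ → K) (s₁ s₂ α β γ : K)
    (hs₁ : s₁ ∈ S) (hs₂ : s₂ ∈ S) (hα : α ∈ S) (hβ : β ∈ S) (hγ : γ ∈ S)
    (hsum : α * s₁ + β * s₂ + γ * algebraMap _ K f = 1)
    (h1 : ∀ l, s₁ * x l ∈ S) (h2 : ∀ l, s₂ * (x l - algebraMap _ K (MvPolynomial.pderiv l f) / algebraMap _ K f) ∈ S)
    (h3 : s₂ * (δ (algebraMap _ K f) / algebraMap _ K f) ∈ S) (h4 : ∀ l, algebraMap _ K f * x l ∈ S) (l : τ) :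
    Lop der δ x l ∈ S := by
  have hsq : ∀ (s : K) (y : τ → K), s ∈ S → (∀ l, s * y l ∈ S) → s ^ 2 * Lop der δ y l ∈ S := by
    intro s y hs hy
    have e1 : s ^ 2 * Lop der δ y l = s * δ (s * y l) - δ s * (s * y l) +
        ∑ m, s * (s * y m) * der l (δ (algebraMap (MvPolynomial τ k) K (MvPolynomial.X m))) := by
      rw [Lop_apply, δ.leibniz, mul_add, Finset.mul_sum]
      simp only [smul_eq_mul]
      congr 1
      · ring
      · exact Finset.sum_congr rfl fun _ _ => by ring
    rw [e1]
    refine add_mem (sub_mem (mul_mem hs (hSδ _ (hy l))) (mul_mem (hSδ _ hs) (hy l))) (sum_mem fun m _ => ?_)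
    exact mul_mem (mul_mem hs (hy m)) (hSder _ _ (hSδ _ (hSA _)))
  let I : Ideal S :=
    { carrier := {s | (s : K) * Lop der δ x l ∈ S}
      zero_mem' := by simp
      add_mem' := by
        intro a b ha hb
        change ((a + b : S) : K) * _ ∈ S
        rw [Subring.coe_add, add_mul]; exact add_mem ha hb
      smul_mem' := by
        intro c a ha
        change ((c * a : S) : K) * _ ∈ S
        rw [Subring.coe_mul, mul_assoc]; exact mul_mem c.2 ha }
  have hI1 : (⟨s₁, hs₁⟩ : S) ∈ I.radical := ⟨2, hsq s₁ x hs₁ h1⟩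
  have hI3 : (⟨algebraMap _ K f, hSA f⟩ : S) ∈ I.radical := ⟨2, hsq _ x (hSA f) h4⟩
  have hI2 : (⟨s₂, hs₂⟩ : S) ∈ I.radical := by
    refine ⟨2, ?_⟩
    change s₂ ^ 2 * Lop der δ x l ∈ S
    set w : τ → K := fun l => algebraMap _ K (MvPolynomial.pderiv l f) / algebraMap _ K f with hw
    have e : x = (x - w) + w := by simp
    rw [e, map_add, Pi.add_apply, mul_add]
    refine add_mem (hsq s₂ _ hs₂ h2) ?_
    rw [hw, Lop_dlog der hder δ f hf]
    set t := δ (algebraMap _ K f) / algebraMap _ K f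
    have e2 : s₂ ^ 2 * der l t = s₂ * der l (s₂ * t) - der l s₂ * (s₂ * t) := by
      rw [(der l).leibniz]; simp only [smul_eq_mul]; ring
    rw [e2]
    exact sub_mem (mul_mem hs₂ (hSder _ _ h3)) (mul_mem (hSder _ _ hs₂) h3)
  have h1I : (1 : S) ∈ I.radical := by
    have : (1 : S) = ⟨α, hα⟩ * ⟨s₁, hs₁⟩ + ⟨β, hβ⟩ * ⟨s₂, hs₂⟩ + ⟨γ, hγ⟩ * ⟨algebraMap _ K f, hSA f⟩ := by
      ext; exact hsum.symm
    rw [this]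
    exact add_mem (add_mem (Ideal.mul_mem_left _ _ hI1) (Ideal.mul_mem_left _ _ hI2)) (Ideal.mul_mem_left _ _ hI3)
  obtain ⟨n, hn⟩ := h1I
  rw [one_pow] at hn
  have : ((1 : S) : K) * Lop der δ x l ∈ S := hn
  simpa using this

end DHO

namespace DHO
open Polynomial

section locreg
variable {k τ : Type*} [Field k] [Fintype τ] {K : Type*} [Field K]
  [Algebra (MvPolynomial τ k) K] [Algebra k K] [IsScalarTower k (MvPolynomial τ k) K] [FaithfulSMul (MvPolynomial τ k) K]

theorem loc_reg {f : MvPolynomial τ k} (hf : Prime f) {z : K} {F : (MvPolynomial τ k)[X]} (hF : F.Monic)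
    (hFz : aeval z F = 0) {w : K} (hw : aeval z (derivative F) * w = 1)
    (der : τ → Derivation k K K) (hder : ∀ l a, der l (algebraMap (MvPolynomial τ k) K a) = algebraMap _ K (MvPolynomial.pderiv l a))
    (δ : Derivation k K K) (hSw : w ∈ Sf hf z) (hSder : ∀ l, ∀ u ∈ Sf hf z, der l u ∈ Sf hf z)
    (hSδ : ∀ u ∈ Sf hf z, δ u ∈ Sf hf z)
    {κ : Type*} [Field κ] (π : MvPolynomial τ k →+* κ) (hker : ∀ a, π a = 0 ↔ f ∣ a)
    (hsurj : ∀ x : κ, ∃ a b, π b ≠ 0 ∧ x * π b = π a) (g h : κ[X]) (hh : F.map π = g * h)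
    (c : τ → (MvPolynomial τ k)[X])
    (hc : ∀ l, (c l).map π = C (π (MvPolynomial.pderiv l f)) * (derivative g * h))
    (b : MvPolynomial τ k) (q : (MvPolynomial τ k)[X]) (hb : ¬ f ∣ b)
    (hq : algebraMap _ K b * δ (algebraMap _ K f) = aeval z q) (hgq : g ∣ q.map π) (l : τ) :
    Lop der δ (fun l => aeval z (c l) * w / algebraMap _ K f) l ∈ Sf hf z := by
  have hf0 : algebraMap (MvPolynomial τ k) K f ≠ 0 := by
    rw [Ne, FaithfulSMul.algebraMap_eq_zero_iff]; exact hf.ne_zero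
  obtain ⟨b1, G0, hb1, hG0⟩ := exists_lift π hsurj g
  obtain ⟨b2, H0, hb2, hH0⟩ := exists_lift π hsurj h
  have hF' : (derivative F).map π = derivative g * h + g * derivative h := by
    rw [← derivative_map, hh, derivative_mul]
  have e1 : ∀ l, ∃ q : (MvPolynomial τ k)[X], aeval z (G0 * c l) = algebraMap _ K f * aeval z q := fun l => by
    apply aeval_of_map_dvd π hker hF hFz
    rw [hh, Polynomial.map_mul, hG0, hc]
    exact ⟨C (π b1) * C (π (MvPolynomial.pderiv l f)) * derivative g, by ring⟩
  have e2 : ∀ l, ∃ q : (MvPolynomial τ k)[X], aeval z (H0 * (c l - C (MvPolynomial.pderiv l f) * derivative F)) = algebraMap _ K f * aeval z q := fun l => by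
    apply aeval_of_map_dvd π hker hF hFz
    rw [hh, Polynomial.map_mul, hH0, Polynomial.map_sub, Polynomial.map_mul, hc, hF', map_C]
    exact ⟨-C (π b2) * C (π (MvPolynomial.pderiv l f)) * derivative h, by ring⟩
  have e3 : ∃ q' : (MvPolynomial τ k)[X], aeval z (H0 * q) = algebraMap _ K f * aeval z q' := by
    apply aeval_of_map_dvd π hker hF hFz
    obtain ⟨t, ht⟩ := hgq
    rw [hh, Polynomial.map_mul, hH0, ht]
    exact ⟨C (π b2) * t, by ring⟩
  have e4 : ∃ q' : (MvPolynomial τ k)[X], aeval z (C (b1 * b2) * derivative F - (derivative G0 * H0 + G0 * derivative H0)) = algebraMap _ K f * aeval z q' := by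
    apply aeval_of_map_dvd π hker hF hFz
    have : (C (b1 * b2) * derivative F - (derivative G0 * H0 + G0 * derivative H0)).map π = 0 := by
      simp only [Polynomial.map_sub, Polynomial.map_mul, Polynomial.map_add, ← derivative_map, hG0, hH0, map_C, map_mul, derivative_C_mul, C_mul]
      rw [hh, derivative_mul]; ring
    rw [this]; exact dvd_zero _
  obtain ⟨q4, hq4⟩ := e4
  have hb12 : ¬ f ∣ b1 * b2 := fun hd => by
    rcases hf.dvd_or_dvd hd with h' | h'
    · exact hb1 ((hker _).2 h')
    · exact hb2 ((hker _).2 h')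
  have hb120 : algebraMap (MvPolynomial τ k) K (b1 * b2) ≠ 0 := by
    rw [Ne, FaithfulSMul.algebraMap_eq_zero_iff]; rintro h0; rw [h0] at hb12; exact hb12 (dvd_zero _)
  set U : K := w / algebraMap _ K (b1 * b2) with hU
  have hUS : U ∈ Sf hf z := by
    apply mem_Sf_of_mul hf hb12
    rw [hU, mul_div_cancel₀ _ hb120]; exact hSw
  refine reg (Sf hf z).toSubring der hder δ hSder hSδ (fun a => (Sf hf z).algebraMap_mem a) f hf0 _ (aeval z G0) (aeval z H0)
    (U * aeval z (derivative H0)) (U * aeval z (derivative G0)) (U * aeval z q4) (aeval_mem_Sf hf _) (aeval_mem_Sf hf _)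
    (mul_mem hUS (aeval_mem_Sf hf _)) (mul_mem hUS (aeval_mem_Sf hf _)) (mul_mem hUS (aeval_mem_Sf hf _)) ?_ ?_ ?_ ?_ ?_ l
  · have : U * algebraMap _ K (b1 * b2) * aeval z (derivative F) = 1 := by
      rw [hU, div_mul_cancel₀ _ hb120, mul_comm, hw]
    simp only [map_sub, map_add, map_mul, aeval_C] at hq4 this ⊢
    linear_combination this - U * hq4
  · intro l
    obtain ⟨q, hq⟩ := e1 l
    have : aeval z G0 * (aeval z (c l) * w / algebraMap _ K f) = aeval z q * w := by
      rw [map_mul] at hq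
      field_simp; linear_combination w * hq
    rw [this]; exact mul_mem (aeval_mem_Sf hf _) hSw
  · intro l
    obtain ⟨q, hq⟩ := e2 l
    have : aeval z H0 * (aeval z (c l) * w / algebraMap _ K f - algebraMap _ K (MvPolynomial.pderiv l f) / algebraMap _ K f) = aeval z q * w := by
      rw [map_mul, map_sub, map_mul, aeval_C] at hq
      field_simp; linear_combination w * hq + aeval z H0 * algebraMap _ K (MvPolynomial.pderiv l f) * hw
    rw [this]; exact mul_mem (aeval_mem_Sf hf _) hSw
  · obtain ⟨q', hq'⟩ := e3
    apply mem_Sf_of_mul hf hb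
    have : algebraMap _ K b * (aeval z H0 * (δ (algebraMap _ K f) / algebraMap _ K f)) = aeval z q' := by
      rw [map_mul] at hq'
      field_simp; linear_combination hq' + aeval z H0 * hq
    rw [this]; exact aeval_mem_Sf hf _
  · intro l
    have : algebraMap _ K f * (aeval z (c l) * w / algebraMap _ K f) = aeval z (c l) * w := by field_simp
    rw [this]; exact mul_mem (aeval_mem_Sf hf _) hSw

end locreg
end DHO

namespace DHO
open Polynomial

section pdv
variable {k τ : Type*} [Field k]

theorem totalDegree_pderiv_lt (l : τ) (p : MvPolynomial τ k) (hp : MvPolynomial.pderiv l p ≠ 0) :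
    (MvPolynomial.pderiv l p).totalDegree < p.totalDegree := by
  have hall : ∀ m ∈ (MvPolynomial.pderiv l p).support, (m.sum fun _ e => e) < p.totalDegree := by
    intro m hm
    rw [MvPolynomial.mem_support_iff, MvPolynomial.coeff_pderiv] at hm
    have h1 : m + Finsupp.single l 1 ∈ p.support := by
      rw [MvPolynomial.mem_support_iff]; exact left_ne_zero_of_mul hm
    have h2 := MvPolynomial.le_totalDegree h1
    rw [Finsupp.sum_add_index' (fun _ => rfl) (fun _ _ _ => rfl), Finsupp.sum_single_index rfl] at h2
    omega
  obtain ⟨m, hm⟩ := MvPolynomial.support_nonempty.2 hp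
  have h0 : 0 < p.totalDegree := lt_of_le_of_lt (Nat.zero_le _) (hall m hm)
  unfold MvPolynomial.totalDegree at *
  exact (Finset.sup_lt_iff h0).2 hall

theorem totalDegree_pderiv_le (l : τ) (p : MvPolynomial τ k) :
    (MvPolynomial.pderiv l p).totalDegree ≤ p.totalDegree := by
  by_cases hp : MvPolynomial.pderiv l p = 0
  · rw [hp]; simp
  · exact (totalDegree_pderiv_lt l p hp).le

theorem not_dvd_pderiv (l : τ) (p : MvPolynomial τ k) (hp : MvPolynomial.pderiv l p ≠ 0) :
    ¬ p ∣ MvPolynomial.pderiv l p := by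
  rintro ⟨q, hq⟩
  have hlt := totalDegree_pderiv_lt l p hp
  have h0 := hp
  rw [hq] at h0
  rw [hq, MvPolynomial.totalDegree_mul_of_isDomain (left_ne_zero_of_mul h0) (right_ne_zero_of_mul h0)] at hlt
  omega

theorem exists_pderiv_ne_zero [CharZero k] (p : MvPolynomial τ k) (hp : Irreducible p) :
    ∃ l, MvPolynomial.pderiv l p ≠ 0 := by
  classical
  by_contra! hcon
  have hC : p = MvPolynomial.C (MvPolynomial.coeff 0 p) := by
    ext m
    rw [MvPolynomial.coeff_C]
    split_ifs with h
    · rw [← h]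
    · obtain ⟨l, hl⟩ : ∃ l, m l ≠ 0 := by
        by_contra! h'
        exact h (Finsupp.ext fun l => (h' l).symm)
      have h1 := congrArg (MvPolynomial.coeff (m - Finsupp.single l 1)) (hcon l)
      have h2 : m - Finsupp.single l 1 + Finsupp.single l 1 = m :=
        tsub_add_cancel_of_le (by rw [Finsupp.single_le_iff]; omega)
      rw [MvPolynomial.coeff_pderiv, h2, MvPolynomial.coeff_zero] at h1
      exact (mul_eq_zero.1 h1).resolve_right (Nat.cast_add_one_ne_zero _)
  rw [hC] at hp
  apply hp.not_isUnit
  apply IsUnit.map MvPolynomial.C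
  rw [isUnit_iff_ne_zero]
  intro h0; rw [h0] at hp; simp at hp
end pdv

section WNsec
variable {k τ : Type*} [Field k] {K : Type*} [Field K]
  [Algebra (MvPolynomial τ k) K] [Algebra k K] [IsScalarTower k (MvPolynomial τ k) K]

/-- bounded degree elements. -/
def WN (z : K) (N0 N : ℕ) : Submodule k K where
  carrier := {u | ∃ p : (MvPolynomial τ k)[X], (∀ j, N0 ≤ j → p.coeff j = 0) ∧ (∀ j, (p.coeff j).totalDegree ≤ N) ∧ u = aeval z p}
  zero_mem' := ⟨0, by simp, by simp, by simp⟩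
  add_mem' := by
    rintro u v ⟨p, hp, hp', rfl⟩ ⟨q, hq, hq', rfl⟩
    refine ⟨p + q, fun j hj => by rw [coeff_add, hp j hj, hq j hj, add_zero], fun j => ?_, by rw [map_add]⟩
    rw [coeff_add]
    exact (MvPolynomial.totalDegree_add _ _).trans (max_le (hp' j) (hq' j))
  smul_mem' := by
    rintro c u ⟨p, hp, hp', rfl⟩
    refine ⟨C (MvPolynomial.C c) * p, fun j hj => by rw [coeff_C_mul, hp j hj, mul_zero], fun j => ?_, ?_⟩
    · rw [coeff_C_mul]
      refine (MvPolynomial.totalDegree_mul _ _).trans ?_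
      rw [MvPolynomial.totalDegree_C, zero_add]; exact hp' j
    · rw [map_mul, aeval_C, ← MvPolynomial.algebraMap_eq, ← IsScalarTower.algebraMap_apply, Algebra.smul_def]

theorem WN_mul (z : K) {N0 N M N' : ℕ} {a : MvPolynomial τ k} (ha : a.totalDegree ≤ M) {u : K}
    (hu : u ∈ WN (k := k) (τ := τ) z N0 N) (h : M + N ≤ N') : algebraMap _ K a * u ∈ WN (k := k) (τ := τ) z N0 N' := by
  obtain ⟨p, hp, hp', rfl⟩ := hu
  refine ⟨C a * p, fun j hj => by rw [coeff_C_mul, hp j hj, mul_zero], fun j => ?_, by rw [map_mul, aeval_C]⟩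
  rw [coeff_C_mul]
  exact ((MvPolynomial.totalDegree_mul _ _).trans (add_le_add ha (hp' j))).trans h

instance WN_fin [Finite τ] (z : K) (N0 N : ℕ) : FiniteDimensional k (WN (k := k) (τ := τ) z N0 N) := by
  let φ : (Fin N0 → MvPolynomial.restrictTotalDegree τ k N) →ₗ[k] K :=
    { toFun := fun v => ∑ i, algebraMap (MvPolynomial τ k) K (v i) * z ^ (i : ℕ)
      map_add' := fun v w => by
        simp [add_mul, Finset.sum_add_distrib]
      map_smul' := fun c v => by
        simp only [Pi.smul_apply, Submodule.coe_smul, RingHom.id_apply, Finset.smul_sum]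
        refine Finset.sum_congr rfl fun i _ => ?_
        rw [Algebra.algebraMap_eq_smul_one, smul_assoc, ← Algebra.algebraMap_eq_smul_one, smul_mul_assoc] }
  have hle : WN (k := k) (τ := τ) z N0 N ≤ LinearMap.range φ := by
    rintro u ⟨p, hp, hp', rfl⟩
    refine ⟨fun i => ⟨p.coeff i, (MvPolynomial.mem_restrictTotalDegree _ _ _).2 (hp' i)⟩, ?_⟩
    change ∑ i : Fin N0, algebraMap (MvPolynomial τ k) K (p.coeff i) * z ^ (i : ℕ) = _
    rw [Fin.sum_univ_eq_sum_range (fun i => algebraMap (MvPolynomial τ k) K (p.coeff i) * z ^ i)]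
    have hd : p.degree < N0 := by rw [degree_lt_iff_coeff_zero]; exact hp
    by_cases h0 : p = 0
    · simp [h0]
    rw [aeval_eq_sum_range' (n := N0) ((natDegree_lt_iff_degree_lt h0).2 hd)]
    exact Finset.sum_congr rfl fun i _ => by rw [Algebra.smul_def]
  have : FiniteDimensional k (LinearMap.range φ) := inferInstance
  exact Submodule.finiteDimensional_of_le hle

variable [Fintype τ] [FaithfulSMul (MvPolynomial τ k) K]

theorem deg_lemma {f : MvPolynomial τ k} (hf : Prime f) {z : K} {F : (MvPolynomial τ k)[X]} (hF : F.Monic) (hF1 : F.natDegree ≠ 0)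
    (hdvd : ∀ p : (MvPolynomial τ k)[X], aeval z p = 0 ↔ F ∣ p) {w : K}
    (der : τ → Derivation k K K) (δ : Derivation k K K) (D : MvPolynomial τ k) (hD : D ≠ 0) (N1 e : ℕ)
    (h1 : ∀ i < F.natDegree, algebraMap _ K D * δ (z ^ i * w) ∈ WN (k := k) (τ := τ) z F.natDegree N1)
    (h2 : ∀ i < F.natDegree, ∀ m, algebraMap _ K D * (z ^ i * w * δ (algebraMap (MvPolynomial τ k) K (MvPolynomial.X m))) ∈
      WN (k := k) (τ := τ) z F.natDegree N1)
    (h3 : ∀ i < F.natDegree, ∀ l m, algebraMap _ K D * (z ^ i * w * der l (δ (algebraMap (MvPolynomial τ k) K (MvPolynomial.X m)))) ∈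
      WN (k := k) (τ := τ) z F.natDegree N1)
    (c : τ → (MvPolynomial τ k)[X]) (hc : ∀ l, (c l).natDegree < F.natDegree)
    (hc' : ∀ l j, ((c l).coeff j).totalDegree ≤ f.totalDegree + e) (l : τ)
    (hreg : Lop der δ (fun l => aeval z (c l) * w / algebraMap _ K f) l ∈ Sf hf z) :
    algebraMap _ K D * Lop der δ (fun l => aeval z (c l) * w / algebraMap _ K f) l ∈ WN (k := k) (τ := τ) z F.natDegree (e + N1) := by
  set N0 := F.natDegree with hN0
  set ιK := algebraMap (MvPolynomial τ k) K with hιK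
  have hf0 : ιK f ≠ 0 := by
    rw [Ne, FaithfulSMul.algebraMap_eq_zero_iff]; exact hf.ne_zero
  set u : τ → K := fun m => δ (ιK (MvPolynomial.X m)) with hu
  have hy : ∀ l, aeval z (c l) * w = ∑ i ∈ Finset.range N0, ιK ((c l).coeff i) * (z ^ i * w) := by
    intro l
    rw [aeval_eq_sum_range' (hc l), Finset.sum_mul]
    exact Finset.sum_congr rfl fun i _ => by rw [Algebra.smul_def]; ring
  have hkey : ιK D * (ιK (f ^ 2) * Lop der δ (fun l => aeval z (c l) * w / ιK f) l) =
      ∑ i ∈ Finset.range N0, (ιK (f * (c l).coeff i) * (ιK D * δ (z ^ i * w))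
        + ∑ m, ιK (f * MvPolynomial.pderiv m ((c l).coeff i)) * (ιK D * (z ^ i * w * u m))
        - ∑ m, ιK ((c l).coeff i * MvPolynomial.pderiv m f) * (ιK D * (z ^ i * w * u m))
        + ∑ m, ιK (f * (c m).coeff i) * (ιK D * (z ^ i * w * der l (u m)))) := by
    have e1 : ∀ m, aeval z (c m) * w / ιK f * der l (u m) * ιK f = ∑ i ∈ Finset.range N0, ιK ((c m).coeff i) * (z ^ i * w * der l (u m)) := by
      intro m
      rw [hy m, div_mul_eq_mul_div, div_mul_cancel₀ _ hf0, Finset.sum_mul]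
      exact Finset.sum_congr rfl fun i _ => by ring
    have e2 : δ (aeval z (c l) * w / ιK f) * ιK f ^ 2 = ∑ i ∈ Finset.range N0,
        (ιK f * (ιK ((c l).coeff i) * δ (z ^ i * w)) + ∑ m, ιK f * (ιK (MvPolynomial.pderiv m ((c l).coeff i)) * (z ^ i * w * u m))
        - ∑ m, ιK ((c l).coeff i) * (ιK (MvPolynomial.pderiv m f) * (z ^ i * w * u m))) := by
      rw [der_div _ _ _ hf0, div_mul_cancel₀ _ (pow_ne_zero 2 hf0), hy l, map_sum, Finset.mul_sum, Finset.sum_mul, ← Finset.sum_sub_distrib]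
      refine Finset.sum_congr rfl fun i _ => ?_
      rw [δ.leibniz, smul_eq_mul, smul_eq_mul, deriv_apply_poly δ f, deriv_apply_poly δ ((c l).coeff i), mul_add]
      congr 1
      · congr 1
        rw [Finset.mul_sum, Finset.mul_sum]
        exact Finset.sum_congr rfl fun m _ => by ring
      · rw [Finset.mul_sum]
        exact Finset.sum_congr rfl fun m _ => by ring
    have e3 : ιK D * (ιK (f ^ 2) * Lop der δ (fun l => aeval z (c l) * w / ιK f) l) =
        ιK D * (δ (aeval z (c l) * w / ιK f) * ιK f ^ 2) + ιK D * ιK f * ∑ m, (aeval z (c m) * w / ιK f * der l (u m) * ιK f) := by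
      rw [Lop_apply, map_pow, ← Finset.sum_mul]
      ring
    rw [e3, e2]
    simp only [e1]
    rw [Finset.sum_comm, Finset.mul_sum, Finset.mul_sum, ← Finset.sum_add_distrib]
    refine Finset.sum_congr rfl fun i _ => ?_
    simp only [mul_add, mul_sub, Finset.mul_sum, map_mul]
    congr 1
    · congr 1
      · congr 1
        · ring
        · exact Finset.sum_congr rfl fun m _ => by ring
      · exact Finset.sum_congr rfl fun m _ => by ring
    · exact Finset.sum_congr rfl fun m _ => by ring
  have hmem : ιK D * (ιK (f ^ 2) * Lop der δ (fun l => aeval z (c l) * w / ιK f) l) ∈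
      WN (k := k) (τ := τ) z N0 (2 * f.totalDegree + (e + N1)) := by
    rw [hkey]
    refine sum_mem fun i hi => ?_
    have hi := Finset.mem_range.1 hi
    refine add_mem (sub_mem (add_mem ?_ (sum_mem fun m _ => ?_)) (sum_mem fun m _ => ?_)) (sum_mem fun m _ => ?_)
    · exact WN_mul z ((MvPolynomial.totalDegree_mul _ _).trans (add_le_add le_rfl (hc' l i))) (h1 i hi) (by omega)
    · exact WN_mul z ((MvPolynomial.totalDegree_mul _ _).trans (add_le_add le_rfl ((totalDegree_pderiv_le _ _).trans (hc' l i)))) (h2 i hi m) (by omega)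
    · exact WN_mul z ((MvPolynomial.totalDegree_mul _ _).trans (add_le_add (hc' l i) (totalDegree_pderiv_le _ _))) (h2 i hi m) (by omega)
    · exact WN_mul z ((MvPolynomial.totalDegree_mul _ _).trans (add_le_add le_rfl (hc' m i))) (h3 i hi l m) (by omega)
  obtain ⟨p, hp, hp', hpe⟩ := hmem
  have hpn : p.natDegree < N0 := by
    have hd : p.degree < N0 := by rw [degree_lt_iff_coeff_zero]; exact hp
    by_cases h0 : p = 0
    · rw [h0, natDegree_zero]; omega
    · exact (natDegree_lt_iff_degree_lt h0).2 hd
  obtain ⟨q, hq⟩ := coeff_dvd_sq_of_mem hf hF hF1 hdvd hpn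
    (u := ιK D * Lop der δ (fun l => aeval z (c l) * w / ιK f) l)
    (mul_mem (Subalgebra.algebraMap_mem _ D) hreg) (by rw [← hpe]; ring)
  have hf20 : f ^ 2 ≠ 0 := pow_ne_zero 2 hf.ne_zero
  refine ⟨q, fun j hj => ?_, fun j => ?_, ?_⟩
  · have := hp j hj
    rw [hq, coeff_C_mul] at this
    exact (mul_eq_zero.1 this).resolve_left hf20
  · by_cases h0 : q.coeff j = 0
    · rw [h0]; simp
    have := hp' j
    rw [hq, coeff_C_mul, MvPolynomial.totalDegree_mul_of_isDomain hf20 h0, pow_two,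
      MvPolynomial.totalDegree_mul_of_isDomain hf.ne_zero hf.ne_zero] at this
    omega
  · rw [hq, map_mul, aeval_C] at hpe
    have h20 : ιK (f ^ 2) ≠ 0 := by rw [map_pow]; exact pow_ne_zero 2 hf0
    apply mul_left_cancel₀ h20
    rw [← hpe]; ring

end WNsec
end DHO

namespace DHO
open Polynomial

section mainsec
variable {k : Type*} [Field k] {n m : ℕ} {K : Type*} [Field K]
  [Algebra (MvPolynomial (Fin n) k) K] [Algebra k K] [IsScalarTower k (MvPolynomial (Fin n) k) K] [FaithfulSMul (MvPolynomial (Fin n) k) K]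

/-- Global data, independent of the prime. -/
structure GD (z : K) (F : (MvPolynomial (Fin n) k)[X]) (w : K) (D : MvPolynomial (Fin n) k)
    (der : Fin n → Derivation k K K) (δ : Fin m → Derivation k K K) (N1 : ℕ) : Prop where
  hF : F.Monic
  hF1 : F.natDegree ≠ 0
  hdvd : ∀ p : (MvPolynomial (Fin n) k)[X], aeval z p = 0 ↔ F ∣ p
  hw : aeval z (derivative F) * w = 1
  hder : ∀ l a, der l (algebraMap (MvPolynomial (Fin n) k) K a) = algebraMap _ K (MvPolynomial.pderiv l a)
  hD : D ≠ 0
  hDw : ∃ p : (MvPolynomial (Fin n) k)[X], algebraMap _ K D * w = aeval z p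
  hDder : ∀ l, ∃ p : (MvPolynomial (Fin n) k)[X], algebraMap _ K D * der l z = aeval z p
  hDδ : ∀ j, ∃ p : (MvPolynomial (Fin n) k)[X], algebraMap _ K D * δ j z = aeval z p
  hDX : ∀ j l, ∃ p : (MvPolynomial (Fin n) k)[X], algebraMap _ K D * δ j (algebraMap (MvPolynomial (Fin n) k) K (MvPolynomial.X l)) = aeval z p
  h1 : ∀ j, ∀ i < F.natDegree, algebraMap _ K D * δ j (z ^ i * w) ∈ WN (k := k) (τ := Fin n) z F.natDegree N1
  h2 : ∀ j, ∀ i < F.natDegree, ∀ m, algebraMap _ K D * (z ^ i * w * δ j (algebraMap (MvPolynomial (Fin n) k) K (MvPolynomial.X m))) ∈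
      WN (k := k) (τ := Fin n) z F.natDegree N1
  h3 : ∀ j, ∀ i < F.natDegree, ∀ l m, algebraMap _ K D * (z ^ i * w * der l (δ j (algebraMap (MvPolynomial (Fin n) k) K (MvPolynomial.X m)))) ∈
      WN (k := k) (τ := Fin n) z F.natDegree N1

variable {z : K} {F : (MvPolynomial (Fin n) k)[X]} {w : K} {D : MvPolynomial (Fin n) k}
    {der : Fin n → Derivation k K K} {δ : Fin m → Derivation k K K} {N1 : ℕ}

theorem GD.w_mem (G : GD z F w D der δ N1) {f : MvPolynomial (Fin n) k} (hf : Prime f) (hfD : ¬ f ∣ D) : w ∈ Sf hf z := by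
  obtain ⟨p, hp⟩ := G.hDw
  exact mem_Sf_of_aeval hf hfD hp

theorem per_prime [CharZero k] (G : GD z F w D der δ N1) {κ E : Type*} [Field κ] [Field E] [Algebra κ E]
    [FiniteDimensional κ E] (π : MvPolynomial (Fin n) k →+* κ) (f : MvPolynomial (Fin n) k) (hfi : Irreducible f) (hfD : ¬ f ∣ D)
    (hker : ∀ a, π a = 0 ↔ f ∣ a) (hsurj : ∀ x : κ, ∃ a b, π b ≠ 0 ∧ x * π b = π a)
    (zb : E) (hzb : Algebra.adjoin κ {zb} = ⊤) (hmin : minpoly κ zb ∣ F.map π)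
    (hδf : ∀ j, ∃ (b : MvPolynomial (Fin n) k) (q : (MvPolynomial (Fin n) k)[X]), ¬ f ∣ b ∧
      algebraMap _ K b * δ j (algebraMap _ K f) = aeval z q ∧ aeval zb (q.map π) = 0)
    (e : ℕ) (r : ℕ → ℕ) (a : ℕ → ℕ → MvPolynomial (Fin n) k)
    (ha : ∀ j < F.natDegree, (∀ i, (a j i).totalDegree ≤ e) ∧
      F ∣ (Wq F).coeff j ^ r j + ∑ i ∈ Finset.range (r j), C (a j i) * (Wq F).coeff j ^ i) :
    ∃ c : Fin n → (MvPolynomial (Fin n) k)[X], (∀ l, (c l).natDegree < F.natDegree) ∧ (∃ l j, ¬ f ∣ (c l).coeff j) ∧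
      ∀ j l, algebraMap _ K D * Lop der (δ j) (fun l => aeval z (c l) * w / algebraMap _ K f) l ∈
        WN (k := k) (τ := Fin n) z F.natDegree (e + N1) := by
  have hf : Prime f := hfi.prime
  obtain ⟨h, hh⟩ := hmin
  obtain ⟨c, hc⟩ := c_exists π f hfi hker hsurj F G.hF1 zb hzb h hh e r a ha
  have hcz : CharZero κ := charZero_of_injective_ringHom (f := π.comp MvPolynomial.C) (RingHom.injective _)
  have hSδ0 : ∀ j (a : MvPolynomial (Fin n) k), δ j (algebraMap _ K a) ∈ Sf hf z := by
    intro j a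
    rw [deriv_apply_poly]
    refine sum_mem fun l _ => mul_mem (Subalgebra.algebraMap_mem _ _) ?_
    obtain ⟨p, hp⟩ := G.hDX j l
    exact mem_Sf_of_aeval hf hfD hp
  have hSδ : ∀ j, ∀ u ∈ Sf hf z, δ j u ∈ Sf hf z := by
    intro j u hu
    obtain ⟨p, hp⟩ := G.hDδ j
    exact deriv_mem_Sf hf (δ j) (hSδ0 j) (mem_Sf_of_aeval hf hfD hp) hu
  have hSder : ∀ l, ∀ u ∈ Sf hf z, der l u ∈ Sf hf z := by
    intro l u hu
    obtain ⟨p, hp⟩ := G.hDder l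
    exact deriv_mem_Sf hf (der l) (fun a => by rw [G.hder]; exact Subalgebra.algebraMap_mem _ _) (mem_Sf_of_aeval hf hfD hp) hu
  refine ⟨c, fun l => (hc l).1, ?_, fun j l => ?_⟩
  · obtain ⟨l, hl⟩ := exists_pderiv_ne_zero f hfi
    refine ⟨l, ?_⟩
    by_contra! hcon
    have h0 : (c l).map π = 0 := by
      ext i
      rw [coeff_map, coeff_zero, hker]; exact hcon i
    rw [(hc l).2.2] at h0
    have hintg : IsIntegral κ zb := IsIntegral.of_finite κ zb
    have hFm : F.map π ≠ 0 := (G.hF.map π).ne_zero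
    rw [hh] at hFm
    have hg : derivative (minpoly κ zb) ≠ 0 := by
      intro h'
      have h1 := natDegree_eq_zero_of_derivative_eq_zero h'
      exact (minpoly.natDegree_pos hintg).ne' h1
    rcases mul_eq_zero.1 h0 with h' | h'
    · rw [C_eq_zero, hker] at h'
      exact not_dvd_pderiv l f hl h'
    · exact (mul_ne_zero hg (right_ne_zero_of_mul hFm)) h'
  · obtain ⟨b, q, hb, hq, hq'⟩ := hδf j
    exact deg_lemma hf G.hF G.hF1 G.hdvd der (δ j) D G.hD N1 e (G.h1 j) (G.h2 j) (G.h3 j) c (fun l => (hc l).1)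
      (fun l => (hc l).2.1) l (loc_reg hf G.hF ((G.hdvd F).2 dvd_rfl) G.hw der G.hder (δ j) (G.w_mem hf hfD) hSder (hSδ j) π hker hsurj
        (minpoly κ zb) h hh c (fun l => (hc l).2.2) b q hb hq (minpoly.dvd _ _ hq') l)

theorem abstract_main (G : GD z F w D der δ N1)
    (hconst : ∀ x : K, (∀ j, δ j x = 0) → ∃ c : k, x = algebraMap k K c)
    {ι : Type*} [Infinite ι] (f : ι → MvPolynomial (Fin n) k) (hf : ∀ i, Prime (f i)) (hfD : ∀ i, ¬ f i ∣ D)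
    (hna : ∀ i j, i ≠ j → ¬ f i ∣ f j) (N : ℕ)
    (hex : ∀ i, ∃ c : Fin n → (MvPolynomial (Fin n) k)[X], (∀ l, (c l).natDegree < F.natDegree) ∧ (∃ l j, ¬ f i ∣ (c l).coeff j) ∧
      ∀ j l, algebraMap _ K D * Lop der (δ j) (fun l => aeval z (c l) * w / algebraMap _ K (f i)) l ∈
        WN (k := k) (τ := Fin n) z F.natDegree N) : False := by
  classical
  choose c hc hc2 hc3 using hex
  have hD0 : algebraMap (MvPolynomial (Fin n) k) K D ≠ 0 := by
    rw [Ne, FaithfulSMul.algebraMap_eq_zero_iff]; exact G.hD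
  have hf0 : ∀ i, algebraMap (MvPolynomial (Fin n) k) K (f i) ≠ 0 := fun i => by
    rw [Ne, FaithfulSMul.algebraMap_eq_zero_iff]; exact (hf i).ne_zero
  let μ : K →ₗ[k] K := LinearMap.mulLeft k (algebraMap (MvPolynomial (Fin n) k) K D)
  let Φ : (Fin n → K) →ₗ[k] (Fin n → K) := LinearMap.compLeft μ (Fin n)
  have hΦ : Function.Injective Φ := by
    intro a b hab
    funext l
    exact mul_left_cancel₀ hD0 (congrFun hab l)
  let V : Submodule k (Fin n → K) := Submodule.pi Set.univ fun _ => WN (k := k) (τ := Fin n) z F.natDegree N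
  have hV : FiniteDimensional k V := by
    let ψ : V →ₗ[k] (Fin n → WN (k := k) (τ := Fin n) z F.natDegree N) :=
      LinearMap.pi fun l => LinearMap.codRestrict _ ((LinearMap.proj l).comp V.subtype) (fun v => v.2 l trivial)
    refine FiniteDimensional.of_injective ψ ?_
    intro a b hab
    ext l
    exact congrArg Subtype.val (congrFun hab l)
  let Gs : Submodule k (Fin n → K) := V.comap Φ
  have hGs : FiniteDimensional k Gs := by
    let ψ : Gs →ₗ[k] V := LinearMap.restrict Φ (fun v hv => hv)
    refine FiniteDimensional.of_injective ψ ?_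
    intro a b hab
    exact Subtype.ext (hΦ (congrArg Subtype.val hab))
  refine finiteness_principle δ hconst (fun j => Lop der (δ j)) (fun j => Lop_smul der (δ j)) Gs
    (fun i l => aeval z (c i l) * w / algebraMap _ K (f i)) ?_ ?_
  · intro j i l _
    exact hc3 i j l
  · rw [linearIndependent_iff']
    intro s lam hsum i hi
    by_contra hne
    obtain ⟨l, j, hlj⟩ := hc2 i
    apply hlj
    refine coeff_dvd_of_mem (hf i) G.hF G.hF1 G.hdvd (hc i l) (z := z)
      (u := aeval z (c i l) / algebraMap _ K (f i)) ?_ (by rw [mul_div_cancel₀ _ (hf0 i)]) j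
    have hxm : ∀ i', i' ≠ i → aeval z (c i' l) * w / algebraMap _ K (f i') ∈ Sf (hf i) z := by
      intro i' hi'
      apply mem_Sf_of_mul (hf i) (hna i i' (Ne.symm hi'))
      rw [mul_div_cancel₀ _ (hf0 i')]
      exact mul_mem (aeval_mem_Sf _ _) (G.w_mem (hf i) (hfD i))
    have hsmul : ∀ (t : k) (u : K), u ∈ Sf (hf i) z → t • u ∈ Sf (hf i) z := by
      intro t u hu
      rw [Algebra.smul_def, IsScalarTower.algebraMap_apply k (MvPolynomial (Fin n) k) K]
      exact mul_mem (Subalgebra.algebraMap_mem _ _) hu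
    have hs := congrFun hsum l
    rw [← Finset.add_sum_erase _ _ hi] at hs
    simp only [Pi.add_apply, Finset.sum_apply, Pi.smul_apply, Pi.zero_apply] at hs
    have hxi : aeval z (c i l) * w / algebraMap _ K (f i) ∈ Sf (hf i) z := by
      have e : aeval z (c i l) * w / algebraMap _ K (f i) = (lam i)⁻¹ • (- ∑ i' ∈ s.erase i, lam i' • (aeval z (c i' l) * w / algebraMap _ K (f i'))) := by
        rw [← eq_neg_of_add_eq_zero_left hs, smul_smul, inv_mul_cancel₀ hne, one_smul]
      rw [e]
      refine hsmul _ _ (neg_mem (sum_mem fun i' hi' => hsmul _ _ (hxm i' (Finset.ne_of_mem_erase hi'))))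
    have e : aeval z (c i l) / algebraMap _ K (f i) = aeval z (derivative F) * (aeval z (c i l) * w / algebraMap _ K (f i)) := by
      linear_combination (-(aeval z (c i l) / algebraMap _ K (f i))) * G.hw
    rw [e]
    exact mul_mem (aeval_mem_Sf _ _) hxi

end mainsec
end DHO

namespace DHO
open Polynomial

section global
variable {k : Type*} [Field k] [CharZero k] {n m : ℕ} {K : Type*} [Field K]
  [Algebra (MvPolynomial (Fin n) k) K] [Algebra k K] [IsScalarTower k (MvPolynomial (Fin n) k) K] [FaithfulSMul (MvPolynomial (Fin n) k) K]

theorem clear_one {L : Type*} [Field L] [Algebra (MvPolynomial (Fin n) k) L] [IsFractionRing (MvPolynomial (Fin n) k) L]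
    [Algebra L K] [IsScalarTower (MvPolynomial (Fin n) k) L K] {z : K} (hz : Algebra.adjoin L {z} = ⊤) (u : K) :
    ∃ D : MvPolynomial (Fin n) k, D ≠ 0 ∧ ∃ p : (MvPolynomial (Fin n) k)[X], algebraMap _ K D * u = aeval z p := by
  have hu : u ∈ Algebra.adjoin L {z} := by rw [hz]; trivial
  rw [Algebra.adjoin_singleton_eq_range_aeval] at hu
  obtain ⟨q, rfl⟩ := hu
  obtain ⟨b, P, hb, hP⟩ := exists_lift (algebraMap (MvPolynomial (Fin n) k) L) (fun x => by
    obtain ⟨a, b, hb, rfl⟩ := IsFractionRing.div_surjective (A := MvPolynomial (Fin n) k) x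
    have hb0 : algebraMap (MvPolynomial (Fin n) k) L b ≠ 0 := IsFractionRing.to_map_ne_zero_of_mem_nonZeroDivisors hb
    exact ⟨a, b, hb0, div_mul_cancel₀ _ hb0⟩) q
  refine ⟨b, fun h => hb (by rw [h, map_zero]), P, ?_⟩
  rw [← aeval_map_algebraMap L z P, hP]
  simp only [RingHom.coe_coe, map_mul, aeval_C]
  rw [IsScalarTower.algebraMap_apply (MvPolynomial (Fin n) k) L K]
  rfl

theorem clear_fin {L : Type*} [Field L] [Algebra (MvPolynomial (Fin n) k) L] [IsFractionRing (MvPolynomial (Fin n) k) L]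
    [Algebra L K] [IsScalarTower (MvPolynomial (Fin n) k) L K] {z : K} (hz : Algebra.adjoin L {z} = ⊤)
    {F : (MvPolynomial (Fin n) k)[X]} (hF : F.Monic) (hF1 : F.natDegree ≠ 0) (hFz : aeval z F = 0) (s : Set K) (hs : s.Finite) :
    ∃ D : MvPolynomial (Fin n) k, D ≠ 0 ∧ ∃ N, ∀ u ∈ s, algebraMap _ K D * u ∈ WN (k := k) (τ := Fin n) z F.natDegree N := by
  induction s, hs using Set.Finite.induction_on with
  | empty => exact ⟨1, one_ne_zero, 0, by simp⟩
  | insert _ _ ih =>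
    rename_i u t _ _
    obtain ⟨D, hD, N, h⟩ := ih
    obtain ⟨D', hD', p, hp⟩ := clear_one (k := k) (n := n) hz u
    have hu : algebraMap _ K D' * u ∈ WN (k := k) (τ := Fin n) z F.natDegree
        ((Finset.range F.natDegree).sup fun j => ((p %ₘ F).coeff j).totalDegree) := by
      have hlt : (p %ₘ F).natDegree < F.natDegree := natDegree_modByMonic_lt _ hF (by rintro rfl; simp at hF1)
      have hz0 : ∀ j, F.natDegree ≤ j → (p %ₘ F).coeff j = 0 := fun j hj => coeff_eq_zero_of_natDegree_lt (hlt.trans_le hj)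
      refine ⟨p %ₘ F, hz0, fun j => ?_, ?_⟩
      · by_cases hj : j < F.natDegree
        · exact Finset.le_sup (f := fun j => ((p %ₘ F).coeff j).totalDegree) (Finset.mem_range.2 hj)
        · rw [hz0 j (not_lt.1 hj)]; simp
      · rw [hp]
        conv_lhs => rw [← modByMonic_add_div p F]
        rw [map_add, map_mul, hFz, zero_mul, add_zero]
    set N' := (Finset.range F.natDegree).sup fun j => ((p %ₘ F).coeff j).totalDegree
    refine ⟨D * D', mul_ne_zero hD hD', D'.totalDegree + N + (D.totalDegree + N'), ?_⟩
    intro v hv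
    rcases Set.mem_insert_iff.1 hv with rfl | hv
    · rw [map_mul, mul_assoc]
      exact WN_mul z le_rfl hu (by omega)
    · rw [map_mul, mul_comm (algebraMap _ K D), mul_assoc]
      exact WN_mul z le_rfl (h v hv) (by omega)

theorem exists_der {L : Type*} [Field L] [Algebra (MvPolynomial (Fin n) k) L] [IsFractionRing (MvPolynomial (Fin n) k) L]
    [Algebra k L] [IsScalarTower k (MvPolynomial (Fin n) k) L]
    [Algebra L K] [IsScalarTower (MvPolynomial (Fin n) k) L K] [IsScalarTower k L K] [FiniteDimensional L K] (l : Fin n) :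
    ∃ d : Derivation k K K, ∀ a, d (algebraMap (MvPolynomial (Fin n) k) K a) = algebraMap _ K (MvPolynomial.pderiv l a) := by
  have : CharZero L := charZero_of_injective_algebraMap (algebraMap k L).injective
  have := Algebra.FormallyEtale.of_isSeparable L K
  obtain ⟨d, hd⟩ := deriv_frac (k := k) (K := L) (MvPolynomial.pderiv (R := k) l)
  obtain ⟨D, hD⟩ := deriv_extend (k := k) (S := L) (T := K) ((Algebra.linearMap L K).compDer d)
  refine ⟨D, fun a => ?_⟩
  rw [IsScalarTower.algebraMap_apply (MvPolynomial (Fin n) k) L K, hD]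
  change algebraMap L K (d _) = _
  rw [hd]
  rw [← IsScalarTower.algebraMap_apply]

theorem exists_GD {L : Type*} [Field L] [Algebra (MvPolynomial (Fin n) k) L] [IsFractionRing (MvPolynomial (Fin n) k) L]
    [Algebra k L] [IsScalarTower k (MvPolynomial (Fin n) k) L]
    [Algebra L K] [IsScalarTower (MvPolynomial (Fin n) k) L K] [IsScalarTower k L K] [FiniteDimensional L K]
    {R : Type*} [CommRing R] [IsDomain R] [Algebra (MvPolynomial (Fin n) k) R] [Module.Finite (MvPolynomial (Fin n) k) R]
    [Algebra R K] [IsFractionRing R K] [IsScalarTower (MvPolynomial (Fin n) k) R K]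
    (δ : Fin m → Derivation k K K) :
    ∃ (z : R) (F : (MvPolynomial (Fin n) k)[X]) (w : K) (D : MvPolynomial (Fin n) k) (der : Fin n → Derivation k K K) (N1 : ℕ),
      GD (algebraMap R K z) F w D der δ N1 ∧
      ∀ x : R, ∃ p : (MvPolynomial (Fin n) k)[X], algebraMap _ K D * algebraMap R K x = aeval (algebraMap R K z) p := by
  classical
  have : CharZero L := charZero_of_injective_algebraMap (algebraMap k L).injective
  have hinj : Function.Injective (algebraMap (MvPolynomial (Fin n) k) R) := by
    have h := FaithfulSMul.algebraMap_injective (MvPolynomial (Fin n) k) K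
    rw [IsScalarTower.algebraMap_eq (MvPolynomial (Fin n) k) R K] at h
    exact Function.Injective.of_comp h
  have : FaithfulSMul (MvPolynomial (Fin n) k) R := (faithfulSMul_iff_algebraMap_injective _ _).2 hinj
  have hRint : Algebra.IsIntegral (MvPolynomial (Fin n) k) R := inferInstance
  obtain ⟨z, hz⟩ : ∃ z : R, Algebra.adjoin L {algebraMap R K z} = ⊤ := by
    obtain ⟨α, hα⟩ := Field.exists_primitive_element L K
    have hα' := Algebra.adjoin_eq_top_of_primitive_element (IsAlgebraic.of_finite L α) hα
    obtain ⟨x, y, hy, rfl⟩ := IsFractionRing.div_surjective (A := R) α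
    have hy0 := nonZeroDivisors.ne_zero hy
    have hyK : algebraMap R K y ≠ 0 := IsFractionRing.to_map_ne_zero_of_mem_nonZeroDivisors hy
    obtain ⟨c, d, hd, hcd⟩ := Algebra.IsAlgebraic.exists_smul_eq_mul (MvPolynomial (Fin n) k) x hy0
    refine ⟨c, ?_⟩
    rw [eq_top_iff, ← hα']
    apply Algebra.adjoin_le
    rw [Set.singleton_subset_iff]
    have h1 := congrArg (algebraMap R K) hcd
    rw [Algebra.smul_def, map_mul, map_mul, ← IsScalarTower.algebraMap_apply, IsScalarTower.algebraMap_apply (MvPolynomial (Fin n) k) L K] at h1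
    have hdL : algebraMap (MvPolynomial (Fin n) k) L d ≠ 0 := by
      simpa using hd
    have hdK : algebraMap L K (algebraMap (MvPolynomial (Fin n) k) L d) ≠ 0 := by
      simpa using hdL
    have e : algebraMap R K x / algebraMap R K y = algebraMap L K (algebraMap (MvPolynomial (Fin n) k) L d)⁻¹ * algebraMap R K c := by
      rw [map_inv₀]; field_simp; linear_combination h1
    rw [e]
    exact mul_mem (Subalgebra.algebraMap_mem _ _) (Algebra.subset_adjoin rfl)
  set zK := algebraMap R K z with hzK
  have hintg : IsIntegral (MvPolynomial (Fin n) k) zK := (hRint.isIntegral z).algebraMap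
  set F := minpoly (MvPolynomial (Fin n) k) zK with hFdef
  have hF : F.Monic := minpoly.monic hintg
  have hF1 : F.natDegree ≠ 0 := (minpoly.natDegree_pos hintg).ne'
  have hdvd : ∀ p : (MvPolynomial (Fin n) k)[X], aeval zK p = 0 ↔ F ∣ p := minpoly.isIntegrallyClosed_dvd_iff hintg
  have hF' : aeval zK (derivative F) ≠ 0 := by
    rw [Ne, hdvd]
    intro h
    have h0 := eq_zero_of_dvd_of_natDegree_lt h (natDegree_derivative_lt hF1)
    exact hF1 (natDegree_eq_zero_of_derivative_eq_zero h0)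
  set w := (aeval zK (derivative F))⁻¹ with hw
  choose der hder using fun l => exists_der (k := k) (n := n) (K := K) (L := L) l
  obtain ⟨gens, hgens⟩ := Module.Finite.fg_top (R := MvPolynomial (Fin n) k) (M := R)
  let uX : Fin m → Fin n → K := fun j l => δ j (algebraMap (MvPolynomial (Fin n) k) K (MvPolynomial.X l))
  let s : Set K := {w} ∪ Set.range (fun l => der l zK) ∪ Set.range (fun j => δ j zK) ∪ Set.range (fun q : Fin m × Fin n => uX q.1 q.2)
    ∪ Set.range (fun q : Fin m × Fin F.natDegree => δ q.1 (zK ^ (q.2 : ℕ) * w))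
    ∪ Set.range (fun q : Fin m × Fin F.natDegree × Fin n => zK ^ (q.2.1 : ℕ) * w * uX q.1 q.2.2)
    ∪ Set.range (fun q : Fin m × Fin F.natDegree × Fin n × Fin n => zK ^ (q.2.1 : ℕ) * w * der q.2.2.1 (uX q.1 q.2.2.2))
    ∪ (algebraMap R K) '' (gens : Set R)
  have hs : s.Finite := by
    refine Set.Finite.union (Set.Finite.union (Set.Finite.union (Set.Finite.union (Set.Finite.union (Set.Finite.union (Set.Finite.union ?_ ?_) ?_) ?_) ?_) ?_) ?_) ?_
    · exact Set.finite_singleton _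
    all_goals first | exact Set.finite_range _ | exact gens.finite_toSet.image _
  obtain ⟨D, hD, N1, hN1⟩ := clear_fin (k := k) (L := L) hz hF hF1 ((hdvd F).2 dvd_rfl) s hs
  have hp : ∀ u ∈ s, ∃ p : (MvPolynomial (Fin n) k)[X], algebraMap _ K D * u = aeval zK p := by
    intro u hu
    obtain ⟨p, -, -, hp⟩ := hN1 u hu
    exact ⟨p, hp⟩
  have m1 : w ∈ s := Or.inl (Or.inl (Or.inl (Or.inl (Or.inl (Or.inl (Or.inl rfl))))))
  have m2 : ∀ l, der l zK ∈ s := fun l => Or.inl (Or.inl (Or.inl (Or.inl (Or.inl (Or.inl (Or.inr ⟨l, rfl⟩))))))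
  have m3 : ∀ j, δ j zK ∈ s := fun l => Or.inl (Or.inl (Or.inl (Or.inl (Or.inl (Or.inr ⟨l, rfl⟩)))))
  have m4 : ∀ j l, uX j l ∈ s := fun j l => Or.inl (Or.inl (Or.inl (Or.inl (Or.inr ⟨(j, l), rfl⟩))))
  have m5 : ∀ j, ∀ i < F.natDegree, δ j (zK ^ i * w) ∈ s := fun j i hi => Or.inl (Or.inl (Or.inl (Or.inr ⟨(j, ⟨i, hi⟩), rfl⟩)))
  have m6 : ∀ j, ∀ i < F.natDegree, ∀ l, zK ^ i * w * uX j l ∈ s := fun j i hi l => Or.inl (Or.inl (Or.inr ⟨(j, ⟨i, hi⟩, l), rfl⟩))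
  have m7 : ∀ j, ∀ i < F.natDegree, ∀ l l', zK ^ i * w * der l (uX j l') ∈ s := fun j i hi l l' => Or.inl (Or.inr ⟨(j, ⟨i, hi⟩, l, l'), rfl⟩)
  have m8 : ∀ x ∈ gens, algebraMap R K x ∈ s := fun x hx => Or.inr ⟨x, hx, rfl⟩
  refine ⟨z, F, w, D, der, N1, ⟨hF, hF1, hdvd, mul_inv_cancel₀ hF', hder, hD, hp _ m1, fun l => hp _ (m2 l), fun j => hp _ (m3 j),
    fun j l => hp _ (m4 j l), fun j i hi => hN1 _ (m5 j i hi), fun j i hi l => hN1 _ (m6 j i hi l), fun j i hi l l' => hN1 _ (m7 j i hi l l')⟩, ?_⟩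
  intro x
  have hx : x ∈ Submodule.span (MvPolynomial (Fin n) k) (gens : Set R) := by rw [hgens]; trivial
  induction hx using Submodule.span_induction with
  | mem x hx => exact hp _ (m8 x hx)
  | zero => exact ⟨0, by simp⟩
  | add x y _ _ hx hy =>
    obtain ⟨p, hp⟩ := hx
    obtain ⟨q, hq⟩ := hy
    exact ⟨p + q, by rw [map_add, map_add, mul_add, hp, hq]⟩
  | smul a x _ hx =>
    obtain ⟨p, hp⟩ := hx
    refine ⟨C a * p, ?_⟩
    rw [map_mul, aeval_C, ← hp, Algebra.smul_def, map_mul, ← IsScalarTower.algebraMap_apply]; ring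

end global
end DHO

namespace DHO
open Polynomial

section height
variable {R : Type*} [CommRing R] [IsDomain R]

theorem ht_ne_bot {P : PrimeSpectrum R} (hP : Order.height P = 1) : P.asIdeal ≠ ⊥ := by
  intro h
  have : IsMin P := by
    intro Q hQ
    change P.asIdeal ≤ Q.asIdeal
    rw [h]; exact bot_le
  rw [← Order.height_eq_zero] at this
  rw [this] at hP
  exact zero_ne_one hP

theorem ht_eq {P : PrimeSpectrum R} (hP : Order.height P = 1) (Q : Ideal R) (hQ : Q.IsPrime) (hQ0 : Q ≠ ⊥) (hle : Q ≤ P.asIdeal) :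
    Q = P.asIdeal := by
  by_contra hne
  let B : PrimeSpectrum R := ⟨⊥, Ideal.isPrime_bot⟩
  let Q' : PrimeSpectrum R := ⟨Q, hQ⟩
  have h1 : B < Q' := lt_of_le_of_ne (show (⊥ : Ideal R) ≤ Q from bot_le) (fun h => hQ0 (congrArg PrimeSpectrum.asIdeal h).symm)
  have h2 : Q' < P := lt_of_le_of_ne hle (fun h => hne (congrArg PrimeSpectrum.asIdeal h))
  have a1 := Order.height_add_one_le h1
  have a2 := Order.height_add_one_le h2
  rw [hP] at a2
  have a3 : (1 : ℕ∞) ≤ Order.height Q' := le_trans (by simp) a1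
  have a4 : (1 : ℕ∞) + 1 ≤ 1 := le_trans (by gcongr) a2
  exact absurd a4 (by decide)

theorem fin_primes [IsNoetherianRing R] (x : R) (hx : x ≠ 0) : {P : PrimeSpectrum R | Order.height P = 1 ∧ x ∈ P.asIdeal}.Finite := by
  have hfin := Ideal.finite_minimalPrimes_of_isNoetherianRing R (Ideal.span {x})
  refine Set.Finite.of_finite_image (f := PrimeSpectrum.asIdeal) (hfin.subset ?_) (fun a _ b _ h => PrimeSpectrum.ext h)
  rintro _ ⟨P, ⟨hP, hxP⟩, rfl⟩
  refine ⟨⟨P.isPrime, (Ideal.span_singleton_le_iff_mem _).2 hxP⟩, ?_⟩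
  rintro Q ⟨hQ, hQx⟩ hle
  have hQ0 : Q ≠ ⊥ := by
    rintro rfl
    exact hx ((Ideal.span_singleton_le_iff_mem _).1 hQx)
  exact (ht_eq hP Q hQ hQ0 hle).ge

theorem contr_principal {A : Type*} [CommRing A] [IsDomain A] [UniqueFactorizationMonoid A] [Algebra A R] [FaithfulSMul A R]
    [IsIntegrallyClosed A] [Algebra.IsIntegral A R] {P : PrimeSpectrum R} (hP : Order.height P = 1) :
    ∃ f : A, Prime f ∧ P.asIdeal.comap (algebraMap A R) = Ideal.span {f} := by
  have hne : P.asIdeal.comap (algebraMap A R) ≠ ⊥ := fun h => ht_ne_bot hP (Ideal.eq_bot_of_comap_eq_bot h)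
  have hprime : (P.asIdeal.comap (algebraMap A R)).IsPrime := Ideal.IsPrime.comap _
  obtain ⟨f, hfm, hf⟩ := hprime.exists_mem_prime_of_ne_bot hne
  refine ⟨f, hf, ?_⟩
  have hsp : (Ideal.span {f}).IsPrime := (Ideal.span_singleton_prime hf.ne_zero).2 hf
  have hlo : P.asIdeal.LiesOver (P.asIdeal.comap (algebraMap A R)) := ⟨rfl⟩
  obtain ⟨P', hle, hP', hover⟩ := Ideal.exists_ideal_le_liesOver_of_le (p := Ideal.span {f}) (q := P.asIdeal.comap (algebraMap A R))
    P.asIdeal ((Ideal.span_singleton_le_iff_mem _).2 hfm)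
  have h1 : Ideal.span {f} = P'.comap (algebraMap A R) := hover.over
  have hP'0 : P' ≠ ⊥ := by
    rintro rfl
    have : f ∈ (⊥ : Ideal R).comap (algebraMap A R) := by rw [← h1]; exact Ideal.mem_span_singleton_self f
    rw [Ideal.mem_comap, Ideal.mem_bot, FaithfulSMul.algebraMap_eq_zero_iff] at this
    exact hf.ne_zero this
  rw [h1, ht_eq hP P' hP' hP'0 hle]

end height

section pdata
variable {k : Type*} [Field k] [CharZero k] {n m : ℕ} {K : Type*} [Field K]
  [Algebra (MvPolynomial (Fin n) k) K] [Algebra k K] [IsScalarTower k (MvPolynomial (Fin n) k) K] [FaithfulSMul (MvPolynomial (Fin n) k) K]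
    {R : Type*} [CommRing R] [IsDomain R] [Algebra (MvPolynomial (Fin n) k) R] [Algebra k R]
    [Algebra R K] [IsFractionRing R K] [IsScalarTower (MvPolynomial (Fin n) k) R K]

theorem prime_data {z : R} {F : (MvPolynomial (Fin n) k)[X]} {w : K} {D : MvPolynomial (Fin n) k}
    {der : Fin n → Derivation k K K} {δ : Fin m → Derivation k K K} {N1 : ℕ}
    (G : GD (algebraMap R K z) F w D der δ N1)
    (hDR : ∀ x : R, ∃ p : (MvPolynomial (Fin n) k)[X], algebraMap _ K D * algebraMap R K x = aeval (algebraMap R K z) p)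
    (δR : Fin m → Derivation k R R) (hδ : ∀ j x, δ j (algebraMap R K x) = algebraMap R K (δR j x))
    {κ E : Type*} [Field κ] [Field E] [Algebra κ E] (π : MvPolynomial (Fin n) k →+* κ) (ρ : R →+* E)
    (hπρ : ∀ a, algebraMap κ E (π a) = ρ (algebraMap _ R a)) (P : Ideal R) (hinv : ∀ j, ∀ x ∈ P, δR j x ∈ P)
    (f : MvPolynomial (Fin n) k) (hf : Prime f) (hfP : algebraMap _ R f ∈ P)
    (hDP : algebraMap _ R D ∉ P) (hker : ∀ a, π a = 0 ↔ f ∣ a) (hkerρ : ∀ x, ρ x = 0 ↔ x ∈ P)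
    (hsurj : ∀ x : κ, ∃ a b, π b ≠ 0 ∧ x * π b = π a) (hsurjE : ∀ x : E, ∃ a b, x = ρ a / ρ b)
    (e : ℕ) (r : ℕ → ℕ) (a : ℕ → ℕ → MvPolynomial (Fin n) k)
    (ha : ∀ j < F.natDegree, (∀ i, (a j i).totalDegree ≤ e) ∧
      F ∣ (Wq F).coeff j ^ r j + ∑ i ∈ Finset.range (r j), C (a j i) * (Wq F).coeff j ^ i) :
    ∃ c : Fin n → (MvPolynomial (Fin n) k)[X], (∀ l, (c l).natDegree < F.natDegree) ∧ (∃ l j, ¬ f ∣ (c l).coeff j) ∧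
      ∀ j l, algebraMap _ K D * Lop der (δ j) (fun l => aeval (algebraMap R K z) (c l) * w / algebraMap _ K f) l ∈
        WN (k := k) (τ := Fin n) (algebraMap R K z) F.natDegree (e + N1) := by
  have hinj : Function.Injective (algebraMap R K) := IsFractionRing.injective R K
  have hev : ∀ p : (MvPolynomial (Fin n) k)[X], aeval (ρ z) (p.map π) = ρ (aeval z p) := by
    intro p
    rw [aeval_def, eval₂_map, aeval_def, hom_eval₂]
    congr 1
    exact RingHom.ext fun x => hπρ x
  have hDR' : ∀ x : R, ∃ p : (MvPolynomial (Fin n) k)[X], algebraMap _ R D * x = aeval z p := by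
    intro x
    obtain ⟨p, hp⟩ := hDR x
    refine ⟨p, hinj ?_⟩
    rw [map_mul, ← IsScalarTower.algebraMap_apply, hp, aeval_algebraMap_apply]
  have hFz : aeval z F = 0 := by
    apply hinj
    rw [map_zero, ← aeval_algebraMap_apply]
    exact (G.hdvd F).2 dvd_rfl
  have hFzb : aeval (ρ z) (F.map π) = 0 := by rw [hev, hFz, map_zero]
  have hintg : IsIntegral κ (ρ z) := ⟨F.map π, G.hF.map π, hFzb⟩
  have hρD : ρ (algebraMap _ R D) ≠ 0 := fun h => hDP ((hkerρ _).1 h)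
  have hmem : ∀ x : R, ρ x ∈ IntermediateField.adjoin κ {ρ z} := by
    intro x
    obtain ⟨p, hp⟩ := hDR' x
    have e1 : ρ x = (algebraMap κ E (π D))⁻¹ * aeval (ρ z) (p.map π) := by
      rw [hev, ← hp, map_mul, hπρ]; field_simp
    rw [e1]
    refine mul_mem (inv_mem (IntermediateField.algebraMap_mem _ _)) ?_
    exact IntermediateField.algebra_adjoin_le_adjoin κ {ρ z} (aeval_mem_adjoin_singleton κ (ρ z))
  have htop : IntermediateField.adjoin κ {ρ z} = ⊤ := by
    rw [eq_top_iff]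
    intro x _
    obtain ⟨a, b, rfl⟩ := hsurjE x
    exact div_mem (hmem a) (hmem b)
  have hzb := Algebra.adjoin_eq_top_of_primitive_element hintg.isAlgebraic htop
  have hfd : FiniteDimensional κ E := by
    have h1 : FiniteDimensional κ (IntermediateField.adjoin κ {ρ z}) := IntermediateField.adjoin.finiteDimensional hintg
    rw [htop] at h1
    exact (IntermediateField.topEquiv (F := κ) (E := E)).toLinearEquiv.finiteDimensional
  have hfD : ¬ f ∣ D := by
    rintro ⟨q, rfl⟩
    apply hDP
    rw [map_mul]; exact Ideal.mul_mem_right _ _ hfP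
  refine per_prime G π f hf.irreducible hfD hker hsurj (ρ z) hzb (minpoly.dvd _ _ hFzb) ?_ e r a ha
  intro j
  obtain ⟨q, hq⟩ := hDR' (δR j (algebraMap _ R f))
  refine ⟨D, q, hfD, ?_, ?_⟩
  · rw [IsScalarTower.algebraMap_apply (MvPolynomial (Fin n) k) R K f, hδ, aeval_algebraMap_apply, ← hq, map_mul,
      ← IsScalarTower.algebraMap_apply]
  · rw [hev, ← hq, hkerρ]
    exact Ideal.mul_mem_left _ _ (hinv j _ hfP)

theorem prime_data' {z : R} {F : (MvPolynomial (Fin n) k)[X]} {w : K} {D : MvPolynomial (Fin n) k}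
    {der : Fin n → Derivation k K K} {δ : Fin m → Derivation k K K} {N1 : ℕ}
    (G : GD (algebraMap R K z) F w D der δ N1)
    (hDR : ∀ x : R, ∃ p : (MvPolynomial (Fin n) k)[X], algebraMap _ K D * algebraMap R K x = aeval (algebraMap R K z) p)
    (δR : Fin m → Derivation k R R) (hδ : ∀ j x, δ j (algebraMap R K x) = algebraMap R K (δR j x))
    (P : Ideal R) (hPp : P.IsPrime) (hinv : ∀ j, ∀ x ∈ P, δR j x ∈ P)
    (f : MvPolynomial (Fin n) k) (hf : Prime f) (hfP : P.comap (algebraMap _ R) = Ideal.span {f})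
    (hDP : algebraMap _ R D ∉ P)
    (e : ℕ) (r : ℕ → ℕ) (a : ℕ → ℕ → MvPolynomial (Fin n) k)
    (ha : ∀ j < F.natDegree, (∀ i, (a j i).totalDegree ≤ e) ∧
      F ∣ (Wq F).coeff j ^ r j + ∑ i ∈ Finset.range (r j), C (a j i) * (Wq F).coeff j ^ i) :
    ∃ c : Fin n → (MvPolynomial (Fin n) k)[X], (∀ l, (c l).natDegree < F.natDegree) ∧ (∃ l j, ¬ f ∣ (c l).coeff j) ∧
      ∀ j l, algebraMap _ K D * Lop der (δ j) (fun l => aeval (algebraMap R K z) (c l) * w / algebraMap _ K f) l ∈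
        WN (k := k) (τ := Fin n) (algebraMap R K z) F.natDegree (e + N1) := by
  set Q := P.comap (algebraMap (MvPolynomial (Fin n) k) R) with hQ
  have hQp : Q.IsPrime := Ideal.IsPrime.comap _
  let κ := FractionRing (MvPolynomial (Fin n) k ⧸ Q)
  let E := FractionRing (R ⧸ P)
  let ρ : R →+* E := (algebraMap (R ⧸ P) E).comp (Ideal.Quotient.mk P)
  let π : MvPolynomial (Fin n) k →+* κ := (algebraMap (MvPolynomial (Fin n) k ⧸ Q) κ).comp (Ideal.Quotient.mk Q)
  have hinjE : Function.Injective (algebraMap (R ⧸ P) E) := IsFractionRing.injective _ _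
  have hinjκ : Function.Injective (algebraMap (MvPolynomial (Fin n) k ⧸ Q) κ) := IsFractionRing.injective _ _
  have hkerρ : ∀ x, ρ x = 0 ↔ x ∈ P := by
    intro x
    change algebraMap (R ⧸ P) E (Ideal.Quotient.mk P x) = 0 ↔ _
    rw [map_eq_zero_iff _ hinjE, Ideal.Quotient.eq_zero_iff_mem]
  have hker : ∀ x, π x = 0 ↔ f ∣ x := by
    intro x
    change algebraMap (MvPolynomial (Fin n) k ⧸ Q) κ (Ideal.Quotient.mk Q x) = 0 ↔ _
    rw [map_eq_zero_iff _ hinjκ, Ideal.Quotient.eq_zero_iff_mem, hfP, Ideal.mem_span_singleton]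
  let g : (MvPolynomial (Fin n) k ⧸ Q) →+* E := Ideal.Quotient.lift Q (ρ.comp (algebraMap _ R)) (fun a ha => (hkerρ _).2 ha)
  have hg : Function.Injective g := by
    apply RingHom.lift_injective_of_ker_le_ideal
    intro a ha
    exact (hkerρ _).1 ha
  let θ : κ →+* E := IsFractionRing.lift hg
  letI : Algebra κ E := θ.toAlgebra
  refine prime_data G hDR δR hδ (κ := κ) (E := E) π ρ ?_ P hinv f hf ?_ hDP hker hkerρ ?_ ?_ e r a ha
  · intro x
    change θ (algebraMap (MvPolynomial (Fin n) k ⧸ Q) κ (Ideal.Quotient.mk Q x)) = _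
    rw [IsFractionRing.lift_algebraMap]
    rfl
  · have : f ∈ Q := by rw [hfP]; exact Ideal.mem_span_singleton_self f
    exact this
  · intro x
    obtain ⟨a, b, hb, rfl⟩ := IsFractionRing.div_surjective (A := MvPolynomial (Fin n) k ⧸ Q) x
    have hb0 : algebraMap (MvPolynomial (Fin n) k ⧸ Q) κ b ≠ 0 := IsFractionRing.to_map_ne_zero_of_mem_nonZeroDivisors hb
    obtain ⟨a, rfl⟩ := Ideal.Quotient.mk_surjective a
    obtain ⟨b, rfl⟩ := Ideal.Quotient.mk_surjective b
    exact ⟨a, b, hb0, div_mul_cancel₀ _ hb0⟩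
  · intro x
    obtain ⟨a, b, hb, rfl⟩ := IsFractionRing.div_surjective (A := R ⧸ P) x
    obtain ⟨a, rfl⟩ := Ideal.Quotient.mk_surjective a
    obtain ⟨b, rfl⟩ := Ideal.Quotient.mk_surjective b
    exact ⟨a, b, rfl⟩
end pdata

end DHO

namespace DHO
open Polynomial

theorem core_final {k : Type*} [Field k] [CharZero k] {n m : ℕ} {R : Type*} [CommRing R] [IsDomain R]
    [Algebra k R] [Algebra (MvPolynomial (Fin n) k) R] [IsScalarTower k (MvPolynomial (Fin n) k) R]
    [Module.Finite (MvPolynomial (Fin n) k) R] [FaithfulSMul (MvPolynomial (Fin n) k) R]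
    (δR : Fin m → Derivation k R R)
    (hinf : {P : PrimeSpectrum R |
        Order.height P = 1 ∧ ∀ i, ∀ x ∈ P.asIdeal, δR i x ∈ P.asIdeal}.Infinite)
    (hc : ∀ a b : R, b ≠ 0 → (∀ i, δR i a * b = a * δR i b) → ∃ c : k, a = algebraMap k R c * b) : False := by
  classical
  let A := MvPolynomial (Fin n) k
  have hNoeth : IsNoetherianRing R := IsNoetherianRing.of_finite A R
  have hRint : Algebra.IsIntegral A R := inferInstance
  let K := FractionRing R
  letI : Algebra (FractionRing A) K := FractionRing.liftAlgebra A K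
  have : IsScalarTower A (FractionRing A) K := FractionRing.isScalarTower_liftAlgebra A K
  have htf : Module.IsTorsionFree A R := inferInstance
  have hinjK : Function.Injective (algebraMap R K) := IsFractionRing.injective R K
  have : IsScalarTower k (FractionRing A) K := by
    refine IsScalarTower.of_algebraMap_eq fun x => ?_
    rw [IsScalarTower.algebraMap_apply k A (FractionRing A), ← IsScalarTower.algebraMap_apply A (FractionRing A) K,
      ← IsScalarTower.algebraMap_apply k A K]
  have : FiniteDimensional (FractionRing A) K := inferInstance
  choose δ hδ using fun j => deriv_frac (K := K) (δR j)
  obtain ⟨z, F, w, D, der, N1, G, hDR⟩ := exists_GD (n := n) (L := FractionRing A) (R := R) δ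
  obtain ⟨e, r, a, ha⟩ := unif_exists G.hF G.hdvd
  have hD0 : algebraMap A R D ≠ 0 := by
    rw [Ne, FaithfulSMul.algebraMap_eq_zero_iff]; exact G.hD
  have hS' := hinf.diff (fin_primes _ hD0)
  set S := {P : PrimeSpectrum R | Order.height P = 1 ∧ ∀ i, ∀ x ∈ P.asIdeal, δR i x ∈ P.asIdeal} \
    {P | Order.height P = 1 ∧ algebraMap A R D ∈ P.asIdeal} with hS
  let T : Set (Ideal A) := (fun P : PrimeSpectrum R => P.asIdeal.comap (algebraMap A R)) '' S
  have hT : T.Infinite := by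
    intro hTf
    apply hS'
    refine Set.Finite.of_finite_fibers _ hTf ?_
    rintro _ ⟨P, hP, rfl⟩
    obtain ⟨f, hf, hfP⟩ := contr_principal (A := A) hP.1.1
    have hf0 : algebraMap A R f ≠ 0 := by
      rw [Ne, FaithfulSMul.algebraMap_eq_zero_iff]; exact hf.ne_zero
    refine (fin_primes _ hf0).subset ?_
    rintro Q ⟨hQ, hQP⟩
    refine ⟨hQ.1.1, ?_⟩
    have hQP' : Q.asIdeal.comap (algebraMap A R) = P.asIdeal.comap (algebraMap A R) := hQP
    change f ∈ Q.asIdeal.comap (algebraMap A R)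
    rw [hQP', hfP]
    exact Ideal.mem_span_singleton_self f
  have : Infinite T := hT.to_subtype
  choose P hPS hPT using fun t : T => t.2
  choose f hf hfP using fun t : T => contr_principal (A := A) (hPS t).1.1
  have hDP : ∀ t, algebraMap A R D ∉ (P t).asIdeal := fun t h => (hPS t).2 ⟨(hPS t).1.1, h⟩
  refine abstract_main G ?_ f hf ?_ ?_ (e + N1) ?_
  · intro x hx
    obtain ⟨p, q, hq, rfl⟩ := IsFractionRing.div_surjective (A := R) x
    have hq0 := nonZeroDivisors.ne_zero hq
    have hqK : algebraMap R K q ≠ 0 := IsFractionRing.to_map_ne_zero_of_mem_nonZeroDivisors hq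
    obtain ⟨c, hc⟩ := hc p q hq0 (by
      intro i
      apply hinjK
      rw [map_mul, map_mul, ← hδ, ← hδ]
      have h1 : algebraMap R K p = algebraMap R K p / algebraMap R K q * algebraMap R K q := (div_mul_cancel₀ _ hqK).symm
      have h2 := congrArg (δ i) h1
      rw [Derivation.leibniz, hx i, smul_zero, add_zero, smul_eq_mul] at h2
      rw [h2, mul_right_comm, div_mul_cancel₀ _ hqK])
    refine ⟨c, ?_⟩
    rw [hc, map_mul, ← IsScalarTower.algebraMap_apply]
    exact mul_div_cancel_right₀ _ hqK
  · intro t ht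
    apply hDP t
    have : D ∈ (P t).asIdeal.comap (algebraMap A R) := by
      rw [hfP t]; exact Ideal.mem_span_singleton.2 ht
    exact this
  · intro s t hst hd
    apply hst
    apply Subtype.ext
    rw [← hPT s, ← hPT t]
    change (P s).asIdeal.comap (algebraMap A R) = (P t).asIdeal.comap (algebraMap A R)
    rw [hfP, hfP, Ideal.span_singleton_eq_span_singleton]
    exact (hf s).irreducible.associated_of_dvd (hf t).irreducible hd
  · intro t
    exact prime_data' G hDR δR hδ (P t).asIdeal (P t).isPrime (hPS t).1.2 (f t) (hf t) (hfP t) (hDP t) e r a ha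

end DHO



/-- **Bell–Launois–León Sánchez–Moosa / Freitag–Moosa** (Corollary 4.5):
Let `R` be an integral domain that is a finitely generated `ℂ`-algebra,
equipped with `ℂ`-linear derivations `δ₁, …, δ_m : R → R`.  If there are
infinitely many height one prime differential ideals of `R`, then there are
`a, b ∈ R`, `b ≠ 0`, with `δᵢ(a)·b = a·δᵢ(b)` for all `i` and such that
`a` is not a `ℂ`-multiple of `b`; that is, the quotient `f = a/b` in
`Frac(R)` lies outside `ℂ` and is a constant for all the (extended)
derivations. -/
theorem exists_nonconstant_rational_constant_of_infinite_height_one_differential_primes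
    {R : Type*} [CommRing R] [IsDomain R] [Algebra ℂ R]
    (hfg : Algebra.FiniteType ℂ R)
    (m : ℕ) (δ : Fin m → Derivation ℂ R R)
    (hinf : {P : PrimeSpectrum R |
        Order.height P = 1 ∧ ∀ i, ∀ x ∈ P.asIdeal, δ i x ∈ P.asIdeal}.Infinite) :
    ∃ a b : R, b ≠ 0 ∧ (∀ i, δ i a * b = a * δ i b) ∧
      ¬∃ c : ℂ, a = algebraMap ℂ R c * b := by
  by_contra hno
  have hc : ∀ a b : R, b ≠ 0 → (∀ i, δ i a * b = a * δ i b) → ∃ c : ℂ, a = algebraMap ℂ R c * b := by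
    intro a b hb h
    by_contra h'
    exact hno ⟨a, b, hb, h, h'⟩
  obtain ⟨s, g, hg, hfin⟩ := exists_finite_inj_algHom_of_fg ℂ R
  letI : Algebra (MvPolynomial (Fin s) ℂ) R := g.toRingHom.toAlgebra
  have h1 : IsScalarTower ℂ (MvPolynomial (Fin s) ℂ) R :=
    IsScalarTower.of_algebraMap_eq fun x => (g.commutes x).symm
  have h2 : Module.Finite (MvPolynomial (Fin s) ℂ) R := hfin
  have h3 : FaithfulSMul (MvPolynomial (Fin s) ℂ) R := (faithfulSMul_iff_algebraMap_injective _ _).2 hg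
  exact DHO.core_final (n := s) δ hinf hc
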